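/- arXiv:2108.11937 — 7 statements merged into one kernel-verified Lean document; each statement's English description precedes it below -/
import Mathlib

section
/- Let f : ℕ → ℂ be a multiplicative function (f(1) = 1 and f(mn) = f(m)f(n) whenever gcd(m,n) = 1). Then the series ∑_{n=1}^∞ |f(n)| converges if and only if the double series ∑_{p prime} ∑_{k=1}^∞ |f(p^k)| converges. -/
open Filter Finset

/-- `f` is a multiplicative arithmetical function: `f 1 = 1` and
`f (m*n) = f m * f n` whenever `gcd m n = 1`. -/
def IsMultFn (f : ℕ → ℂ) : Prop :=
  f 1 = 1 ∧ ∀ m n : ℕ, Nat.Coprime m n → f (m * n) = f m * f n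

/-- The series `∑_{k=0}^∞ g k` converges (in the sense of partial sums) to `L`. -/
def SeriesTendsTo (g : ℕ → ℂ) (L : ℂ) : Prop :=
  Filter.Tendsto (fun N => ∑ k ∈ Finset.range N, g k) Filter.atTop (nhds L)

/-- `f` is an MO function: multiplicative, `∑_{n=1}^∞ f n = 0`, and for each prime `p`
the series `∑_{k=0}^∞ f (p^k)` converges to a nonzero value. -/
def IsMO (f : ℕ → ℂ) : Prop :=
  IsMultFn f ∧ SeriesTendsTo (fun n => f (n + 1)) 0 ∧
    ∀ p : ℕ, p.Prime → ∃ L : ℂ, L ≠ 0 ∧ SeriesTendsTo (fun k => f (p ^ k)) L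

/-!
If a family is absolutely summable, then so is the family of its products over finite index sets.
Apply this to the values `|f q|` at prime powers `q`. An integer `n ≥ 1` is the product of the prime
powers exactly dividing it, so distinct `n` have distinct sets of such prime powers, and `|f n|` is
at most a constant times the product of `|f q|` over that set. Hence `∑ |f n|` is dominated by a
subfamily of the finite products. Conversely, the prime powers are among the positive integers.
-/

/-- The set of prime powers exactly dividing `n`, i.e. the factors `p ^ v_p(n)` of the canonical
factorization of `n`. Recording the powers themselves instead of the pairs `(p, v_p(n))` lets `n`
be recovered as the product of the set. It is empty for `n = 0` as well as for `n = 1`. -/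
def primaryFactors (n : ℕ) : Finset ℕ :=
  n.primeFactors.image fun p ↦ p ^ n.factorization p

theorem factorization_ne_zero_of_mem_primeFactors {n p : ℕ} (hp : p ∈ n.primeFactors) :
    n.factorization p ≠ 0 :=
  Finsupp.mem_support_iff.mp (n.support_factorization ▸ hp)

theorem isPrimePow_of_mem_primaryFactors {n q : ℕ} (hq : q ∈ primaryFactors n) :
    IsPrimePow q := by
  obtain ⟨p, hp, rfl⟩ := mem_image.mp hq
  exact (Nat.prime_of_mem_primeFactors hp).isPrimePow.pow
    (factorization_ne_zero_of_mem_primeFactors hp)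

theorem pairwise_coprime_primaryFactors (n : ℕ) :
    (primaryFactors n : Set ℕ).Pairwise Nat.Coprime := by
  intro q hq r hr hqr
  obtain ⟨p, hp, rfl⟩ := mem_image.mp hq
  obtain ⟨p', hp', rfl⟩ := mem_image.mp hr
  have hpp' : p ≠ p' := fun h ↦ hqr (by rw [h])
  exact Nat.coprime_pow_primes _ _ (Nat.prime_of_mem_primeFactors hp)
    (Nat.prime_of_mem_primeFactors hp') hpp'

theorem injOn_pow_factorization (n : ℕ) :
    Set.InjOn (fun p ↦ p ^ n.factorization p) n.primeFactors := by
  have hleft : Set.LeftInvOn Nat.minFac (fun p ↦ p ^ n.factorization p) n.primeFactors :=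
    fun p hp ↦ (Nat.prime_of_mem_primeFactors hp).pow_minFac
      (factorization_ne_zero_of_mem_primeFactors hp)
  exact hleft.injOn

theorem prod_primaryFactors {n : ℕ} (hn : n ≠ 0) : ∏ q ∈ primaryFactors n, q = n := by
  rw [primaryFactors, prod_image (injOn_pow_factorization n)]
  exact Nat.prod_factorization_pow_eq_self hn

theorem injOn_primaryFactors : Set.InjOn primaryFactors {0}ᶜ :=
  Set.LeftInvOn.injOn (f₁' := fun s ↦ ∏ q ∈ s, q) fun _ hn ↦ prod_primaryFactors hn

section Submultiplicative

variable {R : Type*} [CommSemiring R] [PartialOrder R] [IsOrderedRing R] {g : ℕ → R}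

theorem map_prod_le_of_pairwise_coprime {ι : Type*} (hg : 0 ≤ g)
    (hmul : ∀ m n, m.Coprime n → g (m * n) ≤ g m * g n) {u : ι → ℕ} {s : Finset ι}
    (hu : (s : Set ι).Pairwise (Function.onFun Nat.Coprime u)) :
    g (∏ i ∈ s, u i) ≤ g 1 * ∏ i ∈ s, g (u i) := by
  classical
  induction s using Finset.induction_on with
  | empty => simp
  | insert i s hi ih =>
    rw [coe_insert, Set.pairwise_insert_of_notMem (by simpa using hi)] at hu
    have hcop : (u i).Coprime (∏ j ∈ s, u j) :=
      Nat.Coprime.prod_right fun j hj ↦ (hu.2 j hj).1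
    calc g (∏ j ∈ insert i s, u j) = g (u i * ∏ j ∈ s, u j) := by rw [prod_insert hi]
      _ ≤ g (u i) * g (∏ j ∈ s, u j) := hmul _ _ hcop
      _ ≤ g (u i) * (g 1 * ∏ j ∈ s, g (u j)) := mul_le_mul_of_nonneg_left (ih hu.1) (hg _)
      _ = g 1 * ∏ j ∈ insert i s, g (u j) := by rw [prod_insert hi, mul_left_comm]

theorem map_le_prod_primaryFactors (hg : 0 ≤ g)
    (hmul : ∀ m n, m.Coprime n → g (m * n) ≤ g m * g n) {n : ℕ} (hn : n ≠ 0) :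
    g n ≤ g 1 * ∏ q ∈ primaryFactors n, g q := by
  simpa only [prod_primaryFactors hn] using
    map_prod_le_of_pairwise_coprime hg hmul (pairwise_coprime_primaryFactors n)

end Submultiplicative

theorem summable_indicator_isPrimePow_iff {α : Type*} [AddCommMonoid α] [TopologicalSpace α]
    {g : ℕ → α} :
    Summable ({q | IsPrimePow q}.indicator g) ↔
      Summable fun x : Nat.Primes × ℕ ↦ g ((x.1 : ℕ) ^ (x.2 + 1)) :=
  summable_subtype_iff_indicator.symm.trans Nat.Primes.prodNatEquiv.summable_iff.symm

theorem summable_of_summable_indicator_isPrimePow {g : ℕ → ℝ} (hg : 0 ≤ g)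
    (hmul : ∀ m n, m.Coprime n → g (m * n) ≤ g m * g n)
    (h : Summable ({q | IsPrimePow q}.indicator g)) : Summable g := by
  set a := {q | IsPrimePow q}.indicator g
  have hprod (n : ℕ) : ∏ q ∈ primaryFactors n, a q = ∏ q ∈ primaryFactors n, g q :=
    prod_congr rfl fun q hq ↦
      Set.indicator_of_mem (s := {q | IsPrimePow q}) (isPrimePow_of_mem_primaryFactors hq) g
  have hle (n : ℕ) : g (n + 1) ≤ g 1 * ∏ q ∈ primaryFactors (n + 1), a q :=
    hprod (n + 1) ▸ map_le_prod_primaryFactors hg hmul n.succ_ne_zero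
  have hsub : Summable fun s : Finset ℕ ↦ ∏ q ∈ s, a q :=
    summable_finsetProd_of_summable_norm h.norm
  have hinj : Function.Injective fun n ↦ primaryFactors (n + 1) := fun m n hmn ↦
    Nat.succ_injective (injOn_primaryFactors m.succ_ne_zero n.succ_ne_zero hmn)
  exact (summable_nat_add_iff 1).mp <|
    .of_nonneg_of_le (fun n ↦ hg _) hle ((hsub.comp_injective hinj).mul_left _)

theorem stmt0_general {g : ℕ → ℝ} (hg : 0 ≤ g)
    (hmul : ∀ m n, m.Coprime n → g (m * n) ≤ g m * g n) :
    Summable (fun n ↦ g (n + 1)) ↔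
      Summable fun x : Nat.Primes × ℕ ↦ g ((x.1 : ℕ) ^ (x.2 + 1)) := by
  rw [summable_nat_add_iff 1, ← summable_indicator_isPrimePow_iff]
  exact ⟨fun h ↦ h.indicator _, summable_of_summable_indicator_isPrimePow hg hmul⟩

theorem stmt0 (f : ℕ → ℂ) (hf : IsMultFn f) :
    Summable (fun n : ℕ => ‖f (n + 1)‖) ↔
      Summable (fun x : Nat.Primes × ℕ => ‖f ((x.1 : ℕ) ^ (x.2 + 1))‖) :=
  stmt0_general (fun _ ↦ norm_nonneg _) fun m n hmn ↦ hf.2 m n hmn ▸ norm_mul_le _ _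
end

section
/- Let f : ℕ → ℂ be a completely multiplicative function (f(1) = 1 and f(mn) = f(m)f(n) for all m, n) such that the series ∑_{n=1}^∞ f(n) converges to 0. Then for every prime p one has |f(p)| < 1, the series ∑_{k=0}^∞ f(p^k) converges to 1/(1 − f(p)), and this value is nonzero; in particular f is an MO function. -/
/-!
The terms of a convergent series tend to `0`, so `f p ^ k = f (p ^ k)` tends to `0` along the
powers of `p`, which forces `‖f p‖ < 1`. The series over the powers of `p` is then a convergent
geometric series, and its value `1 / (1 - f p)` cannot vanish.
-/

open Filter Finset

theorem tendsto_zero_of_tendsto_sum_range {G : Type*} [AddCommGroup G] [TopologicalSpace G]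
    [ContinuousSub G] {g : ℕ → G} {a : G}
    (hg : Tendsto (fun N => ∑ k ∈ range N, g k) atTop (nhds a)) :
    Tendsto g atTop (nhds 0) := by
  simpa only [Function.comp_apply, sum_range_succ_sub_sum, sub_self] using
    (hg.comp (tendsto_add_atTop_nat 1)).sub hg

theorem norm_map_lt_one_of_tendsto_zero {R : Type*} [SeminormedRing R] [NormMulClass R]
    (f : ℕ →* R) (hf : Tendsto f atTop (nhds 0)) {n : ℕ} (hn : 1 < n) : ‖f n‖ < 1 := by
  have hpow : Tendsto (fun k : ℕ => f (n ^ k)) atTop (nhds 0) :=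
    hf.comp (tendsto_pow_atTop_atTop_of_one_lt hn)
  simpa only [map_pow, tendsto_pow_atTop_nhds_zero_iff_norm_lt_one] using hpow

theorem hasSum_map_pow_of_norm_lt_one {M K : Type*} [Monoid M] [NormedDivisionRing K]
    (f : M →* K) {x : M} (hx : ‖f x‖ < 1) : HasSum (fun k : ℕ => f (x ^ k)) (1 - f x)⁻¹ := by
  simpa only [map_pow] using hasSum_geometric_of_norm_lt_one hx

theorem stmt1_general (f : ℕ → ℂ) (hf1 : f 1 = 1) (hfc : ∀ m n : ℕ, f (m * n) = f m * f n)
    (hf : Tendsto f atTop (nhds 0)) :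
    (∀ n : ℕ, 1 < n → ‖f n‖ < 1 ∧
      SeriesTendsTo (fun k => f (n ^ k)) (1 / (1 - f n)) ∧ 1 / (1 - f n) ≠ 0) ∧
    (SeriesTendsTo (fun n => f (n + 1)) 0 → IsMO f) := by
  have hpow (n : ℕ) (hn : 1 < n) : ‖f n‖ < 1 ∧
      SeriesTendsTo (fun k => f (n ^ k)) (1 / (1 - f n)) ∧ 1 / (1 - f n) ≠ 0 := by
    let F : ℕ →* ℂ := ⟨⟨f, hf1⟩, hfc⟩
    have hlt : ‖F n‖ < 1 := norm_map_lt_one_of_tendsto_zero F hf hn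
    refine ⟨hlt, ?_, one_div_ne_zero (isUnit_one_sub_of_norm_lt_one hlt).ne_zero⟩
    rw [one_div]
    exact (hasSum_map_pow_of_norm_lt_one F hlt).tendsto_sum_nat
  refine ⟨hpow, fun h0 => ⟨⟨hf1, fun m n _ => hfc m n⟩, h0, fun p hp => ?_⟩⟩
  obtain ⟨-, hsum, hne⟩ := hpow p hp.one_lt
  exact ⟨_, hne, hsum⟩

theorem stmt1 (f : ℕ → ℂ) (hf1 : f 1 = 1)
    (hfc : ∀ m n : ℕ, f (m * n) = f m * f n)
    (h0 : SeriesTendsTo (fun n => f (n + 1)) 0) :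
    (∀ p : ℕ, p.Prime → ‖f p‖ < 1 ∧
      SeriesTendsTo (fun k => f (p ^ k)) (1 / (1 - f p)) ∧ 1 / (1 - f p) ≠ 0) ∧
    IsMO f := by
  have hf : Tendsto f atTop (nhds 0) :=
    (tendsto_add_atTop_iff_nat 1).1 (tendsto_zero_of_tendsto_sum_range h0)
  exact (stmt1_general f hf1 hfc hf).imp (fun h p hp => h p hp.one_lt) (fun h => h h0)
end

section
/- If f : ℕ → ℂ is an MO function, then the series ∑_{n=1}^∞ |f(n)| diverges. -/
open Filter Finset

/-!
If `∑ |f n|` converges, the Euler product expresses `∑ f n` as `∏ p, ∑ k, f (p ^ k)`. Each factor is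
`1 + a p` with `a p = ∑ k, f (p ^ (k + 1))`, and `∑ |a p|` is dominated by the part of `∑ |f n|`
supported on prime powers. An absolutely convergent product of nonzero factors is nonzero, so
`∑ f n` can vanish only if some local factor does.
-/

open scoped Topology

theorem summable_pow_of_summable {G : Type*} [AddCommGroup G] [UniformSpace G]
    [IsUniformAddGroup G] [CompleteSpace G] {f : ℕ → G} (hf : Summable f) {a : ℕ} (ha : 1 < a) :
    Summable fun k : ℕ ↦ f (a ^ k) :=
  hf.comp_injective (Nat.pow_right_injective ha)

theorem summable_norm_tsum_primes_pow_succ {E : Type*} [SeminormedAddCommGroup E] {f : ℕ → E}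
    (hf : Summable (‖f ·‖)) : Summable fun p : Nat.Primes ↦ ‖∑' k : ℕ, f (p ^ (k + 1))‖ := by
  have hpow : Summable fun q : Nat.Primes × ℕ ↦ ‖f (q.1 ^ (q.2 + 1))‖ :=
    hf.comp_injective (Subtype.val_injective.comp Nat.Primes.prodNatEquiv.injective)
  exact hpow.prod.of_nonneg_of_le (fun _ ↦ norm_nonneg _)
    fun p ↦ norm_tsum_le_tsum_norm (hpow.prod_factor p)

theorem toArithmeticFunction_apply {R : Type*} [Zero R] (f : ℕ → R) {n : ℕ} (hn : n ≠ 0) :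
    toArithmeticFunction f n = f n :=
  if_neg hn

theorem isMultiplicative_toArithmeticFunction {R : Type*} [MonoidWithZero R] {f : ℕ → R}
    (hf₁ : f 1 = 1) (hmul : ∀ m n, Nat.Coprime m n → f (m * n) = f m * f n) :
    (toArithmeticFunction f).IsMultiplicative := by
  refine ArithmeticFunction.IsMultiplicative.iff_ne_zero.2 ⟨?_, fun {m n} hm hn hmn ↦ ?_⟩
  · rw [toArithmeticFunction_apply f one_ne_zero, hf₁]
  · rw [toArithmeticFunction_apply f (mul_ne_zero hm hn), toArithmeticFunction_apply f hm,
      toArithmeticFunction_apply f hn, hmul m n hmn]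

section EulerProduct

variable {R : Type*} [NormedCommRing R] [CompleteSpace R] [NormOneClass R] [NormMulClass R]

theorem tsum_ne_zero_of_isMultiplicative {f : ArithmeticFunction R} (hf : f.IsMultiplicative)
    (hs : Summable (‖f ·‖)) (hloc : ∀ p : Nat.Primes, ∑' k : ℕ, f (p ^ k) ≠ 0) :
    ∑' n, f n ≠ 0 := by
  have hfactor (p : Nat.Primes) : ∑' k : ℕ, f (p ^ k) = 1 + ∑' k : ℕ, f (p ^ (k + 1)) := by
    rw [(summable_pow_of_summable hs.of_norm p.prop.one_lt).tsum_eq_zero_add, pow_zero, hf.map_one]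
  rw [← hf.eulerProduct_tprod hs, tprod_congr hfactor]
  exact tprod_one_add_ne_zero_of_summable (fun p ↦ hfactor p ▸ hloc p)
    (summable_norm_tsum_primes_pow_succ hs)

theorem stmt2_general {f : ℕ → R} (hf₁ : f 1 = 1)
    (hmul : ∀ m n, Nat.Coprime m n → f (m * n) = f m * f n)
    (hsum : Tendsto (fun N ↦ ∑ n ∈ range N, f (n + 1)) atTop (𝓝 0))
    (hloc : ∀ p : ℕ, p.Prime → ¬ Tendsto (fun N ↦ ∑ k ∈ range N, f (p ^ k)) atTop (𝓝 0)) :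
    ¬ Summable fun n : ℕ ↦ ‖f (n + 1)‖ := by
  intro hs
  set F := toArithmeticFunction f
  have hF {n : ℕ} (hn : n ≠ 0) : F n = f n := toArithmeticFunction_apply f hn
  have hFs : Summable (‖F ·‖) :=
    (summable_nat_add_iff 1).1 (hs.congr fun n ↦ by rw [hF n.succ_ne_zero])
  refine tsum_ne_zero_of_isMultiplicative (isMultiplicative_toArithmeticFunction hf₁ hmul) hFs
    (fun p hp ↦ hloc p p.prop ?_) ?_
  · have htendsto :=
      (summable_pow_of_summable hFs.of_norm p.prop.one_lt).tendsto_sum_tsum_nat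
    rw [hp] at htendsto
    simpa only [hF (pow_ne_zero _ p.prop.ne_zero)] using htendsto
  · rw [hFs.of_norm.tsum_eq_zero_add, F.map_zero, zero_add]
    simp only [hF (Nat.succ_ne_zero _)]
    exact ((hasSum_iff_tendsto_nat_of_summable_norm hs).2 hsum).tsum_eq

end EulerProduct

theorem stmt2 (f : ℕ → ℂ) (hf : IsMO f) :
    ¬ Summable (fun n : ℕ => ‖f (n + 1)‖) := by
  obtain ⟨⟨hf₁, hmul⟩, hsum, hloc⟩ := hf
  exact stmt2_general hf₁ hmul hsum fun p hp h0 ↦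
    let ⟨_, hL, htendsto⟩ := hloc p hp
    hL (tendsto_nhds_unique htendsto h0)
end

section
/- If f : ℕ → ℂ is an MO function, then the partial sums satisfy ∑_{n ≤ x} f(n) = Ω(1/(x (log log x)^2)); that is, it is NOT the case that there exists a constant C such that |∑_{n ≤ x} f(n)| ≤ C/(x (log log x)^2) for all sufficiently large x. -/
open Filter Finset

/-! If the partial sums at `x` are `O(1 / (x (log log x) ^ s))`, then differences of consecutive
ones give `f n ≪ 1 / (n (log log n) ^ s)`. By Chebyshev's bound there are `O(2 ^ k / k)` primes in
`[2 ^ k, 2 ^ (k + 1))`, so `∑ 1 / (p (log log p) ^ s)` over the primes is dominated by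
`∑ 1 / (k (log k) ^ s)`, which converges for `s > 1`; the higher prime powers are handled by
`f n ≪ 1 / n`. Hence `∑ f n` converges absolutely and equals its Euler product, an absolutely
convergent product of nonzero factors. Such a product is nonzero, but an MO function has sum
zero. -/

open Asymptotics Topology

section EulerProduct

lemma tsum_pow_eq_one_add {R : Type*} [AddCommGroupWithOne R] [TopologicalSpace R]
    [IsTopologicalAddGroup R] [T2Space R] {f : ℕ → R} (hf : f 1 = 1) {p : ℕ}
    (hs : Summable fun k ↦ f (p ^ (k + 1))) :
    ∑' k, f (p ^ k) = 1 + ∑' k, f (p ^ (k + 1)) := by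
  have hs' : Summable fun k ↦ f (p ^ k) := (summable_nat_add_iff (f := fun k ↦ f (p ^ k)) 1).1 hs
  rw [hs'.tsum_eq_zero_add, pow_zero, hf]

lemma prod_primesBelow_tsum_le_exp_tsum {u : ℕ → ℝ} (hu : ∀ n, 0 ≤ u n) (hu₁ : u 1 = 1)
    (hs : Summable fun q : Nat.Primes × ℕ ↦ u (q.1 ^ (q.2 + 1))) (N : ℕ) :
    ∏ p ∈ N.primesBelow, ∑' k, u (p ^ k) ≤
      Real.exp (∑' q : Nat.Primes × ℕ, u (q.1 ^ (q.2 + 1))) := by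
  let Q (p : Nat.Primes) : ℝ := ∑' k, u (p ^ (k + 1))
  have hQ : 0 ≤ Q := fun p ↦ tsum_nonneg fun k ↦ hu _
  have hQs : Summable Q := hs.prod
  let S : Finset Nat.Primes := N.primesBelow.subtype Nat.Prime
  calc ∏ p ∈ N.primesBelow, ∑' k, u (p ^ k)
      = ∏ p ∈ S, (1 + Q p) := by
        rw [← prod_subtype_of_mem _ fun p hp ↦ Nat.prime_of_mem_primesBelow hp]
        exact prod_congr rfl fun p _ ↦ tsum_pow_eq_one_add hu₁ (hs.prod_factor p)
    _ ≤ Real.exp (∑ p ∈ S, Q p) := Real.prod_one_add_le_exp_sum S hQ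
    _ ≤ Real.exp (∑' q : Nat.Primes × ℕ, u (q.1 ^ (q.2 + 1))) := by
        rw [hs.tsum_prod]
        exact Real.exp_le_exp.2 (hQs.sum_le_tsum S fun p _ ↦ hQ p)

lemma summable_of_summable_primePow {u : ℕ → ℝ} (hu : ∀ n, 0 ≤ u n) (hu₁ : u 1 = 1)
    (hmul : ∀ {m n}, Nat.Coprime m n → u (m * n) = u m * u n)
    (hs : Summable fun q : Nat.Primes × ℕ ↦ u (q.1 ^ (q.2 + 1))) : Summable u := by
  have hlocal {p : ℕ} (hp : p.Prime) : Summable fun k ↦ ‖u (p ^ k)‖ :=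
    ((summable_nat_add_iff (f := fun k ↦ u (p ^ k)) 1).1 (hs.prod_factor ⟨p, hp⟩)).norm
  refine (summable_nat_add_iff 1).1 (summable_of_sum_range_le
    (c := Real.exp (∑' q : Nat.Primes × ℕ, u (q.1 ^ (q.2 + 1)))) (fun n ↦ hu _) fun N ↦ ?_)
  obtain ⟨-, hsmooth⟩ :=
    EulerProduct.summable_and_hasSum_smoothNumbers_prod_primesBelow_tsum hu₁ hmul hlocal (N + 1)
  let i (n : Fin N) : (N + 1).smoothNumbers :=
    ⟨n + 1, Nat.mem_smoothNumbers_of_lt n.1.succ_pos (Nat.succ_lt_succ n.2)⟩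
  have hi : Function.Injective i := fun m n h ↦ by simpa [i, Fin.ext_iff] using h
  calc ∑ n ∈ range N, u (n + 1)
      = ∑' n : Fin N, u (i n) := by
        rw [tsum_fintype, ← Fin.sum_univ_eq_sum_range (fun n ↦ u (n + 1))]
    _ ≤ ∑' m : (N + 1).smoothNumbers, u m :=
        tsum_comp_le_tsum_of_inj hsmooth.summable (fun m ↦ hu m) hi
    _ = ∏ p ∈ (N + 1).primesBelow, ∑' k, u (p ^ k) := hsmooth.tsum_eq
    _ ≤ _ := prod_primesBelow_tsum_le_exp_tsum hu hu₁ hs (N + 1)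

lemma primePow_injective :
    Function.Injective fun q : Nat.Primes × ℕ ↦ (q.1 : ℕ) ^ (q.2 + 1) :=
  Subtype.val_injective.comp Nat.Primes.prodNatEquiv.injective

lemma summable_one_div_primePow_add_two :
    Summable fun q : Nat.Primes × ℕ ↦ 1 / (((q.1 : ℕ) ^ (q.2 + 2) : ℕ) : ℝ) := by
  have hsq : Summable fun p : Nat.Primes ↦ 1 / (p : ℝ) ^ 2 :=
    (Real.summable_one_div_nat_pow.2 one_lt_two).comp_injective Nat.Primes.coe_nat_injective
  refine (hsq.mul_of_nonneg summable_geometric_two (fun p ↦ by positivity)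
    fun k ↦ by positivity).of_nonneg_of_le (fun q ↦ by positivity) fun q ↦ ?_
  have hq : (2 : ℝ) ≤ q.1 := mod_cast q.1.2.two_le
  calc 1 / (((q.1 : ℕ) ^ (q.2 + 2) : ℕ) : ℝ)
      = 1 / (q.1 : ℝ) ^ 2 * (1 / (q.1 : ℝ)) ^ q.2 := by
        push_cast
        rw [add_comm, pow_add, one_div_pow, one_div_mul_one_div]
    _ ≤ 1 / (q.1 : ℝ) ^ 2 * (1 / 2) ^ q.2 := by gcongr

variable {R : Type*} [NormedCommRing R] [NormOneClass R] [NormMulClass R]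
  {f : ArithmeticFunction R}

lemma summable_norm_of_isBigO_one_div (hf : f.IsMultiplicative)
    (hO : f =O[atTop] fun n : ℕ ↦ 1 / (n : ℝ))
    (hp : Summable fun p : Nat.Primes ↦ ‖f p‖) : Summable fun n ↦ ‖f n‖ := by
  have hhigher : Summable fun q : Nat.Primes × ℕ ↦ ‖f (q.1 ^ (q.2 + 2))‖ := by
    have hinj : Function.Injective fun q : Nat.Primes × ℕ ↦ (q.1 : ℕ) ^ (q.2 + 2) :=
      primePow_injective.comp (Function.injective_id.prodMap Nat.succ_injective)
    refine summable_of_isBigO summable_one_div_primePow_add_two ?_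
    exact hO.norm_left.comp_tendsto (Nat.cofinite_eq_atTop ▸ hinj.tendsto_cofinite)
  have hlocal (p : Nat.Primes) : Summable fun k ↦ ‖f (p ^ (k + 1))‖ :=
    (summable_nat_add_iff (f := fun k ↦ ‖f (p ^ (k + 1))‖) 1).1 (hhigher.prod_factor p)
  refine summable_of_summable_primePow (fun n ↦ norm_nonneg _) (by simp [hf.map_one])
    (fun h ↦ by simp [hf.map_mul_of_coprime h]) ?_
  refine (summable_prod_of_nonneg fun q ↦ norm_nonneg _).2 ⟨hlocal, ?_⟩
  refine (hp.add hhigher.prod).congr fun p ↦ ?_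
  rw [(hlocal p).tsum_eq_zero_add, zero_add, pow_one]

lemma tsum_ne_zero_of_tsum_prime_pow_ne_zero [CompleteSpace R]
    (hf : f.IsMultiplicative) (hs : Summable fun n ↦ ‖f n‖)
    (hne : ∀ p : ℕ, p.Prime → ∑' k, f (p ^ k) ≠ 0) : ∑' n, f n ≠ 0 := by
  have hpow : Summable fun q : Nat.Primes × ℕ ↦ ‖f (q.1 ^ (q.2 + 1))‖ :=
    hs.comp_injective primePow_injective
  have hlocal (p : Nat.Primes) : ∑' k, f (p ^ k) = 1 + ∑' k, f (p ^ (k + 1)) :=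
    tsum_pow_eq_one_add hf.map_one (hpow.prod_factor p).of_norm
  rw [← hf.eulerProduct_tprod hs, tprod_congr hlocal]
  refine tprod_one_add_ne_zero_of_summable (fun p ↦ hlocal p ▸ hne p p.2) ?_
  exact hpow.prod.of_nonneg_of_le (fun p ↦ norm_nonneg _)
    fun p ↦ norm_tsum_le_tsum_norm (hpow.prod_factor p)

end EulerProduct

section PrimeSeries

lemma sum_log_le_theta (s : Finset Nat.Primes) {x : ℝ} (hs : ∀ p ∈ s, (p : ℝ) ≤ x) :
    ∑ p ∈ s, Real.log p ≤ Chebyshev.theta x := by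
  let ι : Nat.Primes ↪ ℕ := ⟨_, Nat.Primes.coe_nat_injective⟩
  calc ∑ p ∈ s, Real.log p
      = ∑ n ∈ s.map ι, Real.log n := (sum_map s ι fun n ↦ Real.log n).symm
    _ ≤ ∑ n ∈ Icc 0 ⌊x⌋₊ with n.Prime, Real.log n := by
        refine sum_le_sum_of_subset_of_nonneg (fun n hn ↦ ?_)
          fun n _ _ ↦ Real.log_natCast_nonneg n
        obtain ⟨p, hp, rfl⟩ := mem_map.1 hn
        exact mem_filter.2 ⟨mem_Icc.2 ⟨Nat.zero_le _, Nat.le_floor (hs p hp)⟩, p.2⟩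
    _ = Chebyshev.theta x := (Chebyshev.theta_eq_sum_Icc x).symm

lemma card_mul_le_of_forall_log_two_eq (s : Finset Nat.Primes) {k : ℕ}
    (hs : ∀ p ∈ s, Nat.log 2 p = k) : #s * (k : ℝ) ≤ 4 * 2 ^ k := by
  have hlog2 : 0 < Real.log 2 := Real.log_pos one_lt_two
  have hlower (p) (hp : p ∈ s) : k * Real.log 2 ≤ Real.log p := by
    have h : (2 : ℝ) ^ k ≤ p := mod_cast hs p hp ▸ Nat.pow_log_le_self 2 p.2.ne_zero
    simpa using Real.log_le_log (by positivity) h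
  have hupper (p) (hp : p ∈ s) : ((p : ℕ) : ℝ) ≤ 2 ^ (k + 1) :=
    mod_cast hs p hp ▸ (Nat.lt_pow_succ_log_self one_lt_two p).le
  refine le_of_mul_le_mul_right ?_ hlog2
  calc #s * (k : ℝ) * Real.log 2
      = #s • (k * Real.log 2) := by rw [nsmul_eq_mul, mul_assoc]
    _ ≤ ∑ p ∈ s, Real.log p := card_nsmul_le_sum _ _ _ hlower
    _ ≤ Chebyshev.theta (2 ^ (k + 1)) := sum_log_le_theta s hupper
    _ ≤ Real.log (2 ^ 2) * 2 ^ (k + 1) := by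
        convert Chebyshev.theta_le_log4_mul_x (x := 2 ^ (k + 1)) (by positivity) using 3
        norm_num
    _ = 4 * 2 ^ k * Real.log 2 := by rw [Real.log_pow, pow_succ]; push_cast; ring

lemma summable_primes_comp_log_two {b : ℕ → ℝ} (hb : ∀ k, 0 ≤ b k)
    (hs : Summable fun k ↦ 2 ^ k * b k / k) :
    Summable fun p : Nat.Primes ↦ b (Nat.log 2 p) := by
  have hterm (k : ℕ) : 0 ≤ 2 ^ k * b k / k := by have := hb k; positivity
  refine summable_of_sum_le (c := 4 * ∑' k, 2 ^ k * b k / k) (fun p ↦ hb _) fun s ↦ ?_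
  let ℓ (p : Nat.Primes) : ℕ := Nat.log 2 p
  calc ∑ p ∈ s, b (Nat.log 2 p)
      = ∑ k ∈ s.image ℓ, #{p ∈ s | ℓ p = k} • b k := sum_comp b ℓ
    _ ≤ ∑ k ∈ s.image ℓ, 4 * (2 ^ k * b k / k) := by
        refine sum_le_sum fun k hk ↦ ?_
        obtain ⟨p, -, rfl⟩ := mem_image.1 hk
        have hk : (0 : ℝ) < ℓ p := mod_cast Nat.log_pos one_lt_two p.2.two_le
        have hcard := card_mul_le_of_forall_log_two_eq {q ∈ s | ℓ q = ℓ p}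
          fun q hq ↦ (mem_filter.1 hq).2
        rw [nsmul_eq_mul, ← mul_div_assoc, le_div_iff₀ hk, mul_right_comm, ← mul_assoc]
        exact mul_le_mul_of_nonneg_right hcard (hb _)
    _ ≤ 4 * ∑' k, 2 ^ k * b k / k := by
        rw [← mul_sum]
        gcongr
        exact hs.sum_le_tsum _ fun k _ ↦ hterm k

lemma summable_one_div_mul_log_rpow {s : ℝ} (hs : 1 < s) :
    Summable fun n : ℕ ↦ 1 / (n * Real.log n ^ s) := by
  have hanti : ∀ᶠ n : ℕ in atTop,
      1 / (((n + 1 : ℕ) : ℝ) * Real.log (n + 1 : ℕ) ^ s) ≤ 1 / (n * Real.log n ^ s) := by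
    filter_upwards [eventually_gt_atTop 1] with n hn
    have hlog : 0 < Real.log n := Real.log_pos (mod_cast hn)
    have : (0 : ℝ) < n := by positivity
    gcongr <;> simp
  rw [← summable_condensed_iff_of_eventually_nonneg (.of_forall fun n ↦ by positivity) hanti]
  refine ((Real.summable_one_div_nat_rpow.2 hs).mul_left (1 / Real.log 2 ^ s)).congr fun k ↦ ?_
  push_cast
  rw [Real.log_pow, Real.mul_rpow (by positivity) (by positivity)]
  field_simp

lemma tendsto_log_log_atTop : Tendsto (fun x : ℝ ↦ Real.log (Real.log x)) atTop atTop :=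
  Real.tendsto_log_atTop.comp Real.tendsto_log_atTop

lemma log_natLog_isBigO_log_log :
    (fun n : ℕ ↦ Real.log (Nat.log 2 n)) =O[atTop] fun n : ℕ ↦ Real.log (Real.log n) := by
  refine .of_bound 2 ?_
  have hlog : Tendsto (fun n : ℕ ↦ Real.log n) atTop atTop :=
    Real.tendsto_log_atTop.comp tendsto_natCast_atTop_atTop
  filter_upwards [hlog.eventually_ge_atTop (Real.log 2)⁻¹, hlog.eventually_ge_atTop 1,
    eventually_ge_atTop 2] with n hn₁ hn₂ hn₃
  have hpos : (0 : ℝ) < Nat.log 2 n := mod_cast Nat.log_pos one_lt_two hn₃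
  rw [Real.norm_of_nonneg (Real.log_natCast_nonneg _), Real.norm_of_nonneg (Real.log_nonneg hn₂)]
  calc Real.log (Nat.log 2 n)
      ≤ Real.log (Real.log n ^ 2) := by
        refine Real.log_le_log hpos ?_
        calc (Nat.log 2 n : ℝ) ≤ Real.log n * (Real.log 2)⁻¹ := Real.natLog_le_logb n 2
          _ ≤ Real.log n ^ 2 := by rw [sq]; gcongr
    _ = 2 * Real.log (Real.log n) := by simp

lemma summable_primes_one_div_mul_log_log_rpow {s : ℝ} (hs : 1 < s) :
    Summable fun p : Nat.Primes ↦ 1 / (p * Real.log (Real.log p) ^ s) := by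
  let b (k : ℕ) : ℝ := 1 / (2 ^ k * Real.log k ^ s)
  have hb : Summable fun p : Nat.Primes ↦ b (Nat.log 2 p) := by
    refine summable_primes_comp_log_two (fun k ↦ by positivity)
      ((summable_one_div_mul_log_rpow hs).congr fun k ↦ ?_)
    simp only [b]
    field_simp
  have hO : (fun n : ℕ ↦ 1 / (n * Real.log (Real.log n) ^ s)) =O[atTop]
      fun n ↦ b (Nat.log 2 n) := by
    have hpow : (fun n : ℕ ↦ (2 : ℝ) ^ Nat.log 2 n) =O[atTop] fun n : ℕ ↦ (n : ℝ) := by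
      refine .of_bound' ((eventually_ne_atTop 0).mono fun n hn ↦ ?_)
      simpa using (mod_cast Nat.pow_log_le_self 2 hn : (2 : ℝ) ^ Nat.log 2 n ≤ n)
    have hlog := log_natLog_isBigO_log_log.rpow (by positivity : 0 ≤ s)
      ((tendsto_log_log_atTop.comp tendsto_natCast_atTop_atTop).eventually_ge_atTop 0)
    simp only [b, one_div]
    refine (hpow.mul hlog).inv_rev ?_
    filter_upwards [eventually_ge_atTop 4] with n hn h
    have hlog2 : (1 : ℝ) < Nat.log 2 n := mod_cast Nat.le_log_of_pow_le one_lt_two hn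
    have := Real.log_pos hlog2
    exact absurd h (by positivity)
  refine summable_of_isBigO hb (hO.comp_tendsto (k := ((↑) : Nat.Primes → ℕ)) ?_)
  exact Nat.cofinite_eq_atTop ▸ Nat.Primes.coe_nat_injective.tendsto_cofinite

end PrimeSeries

section PartialSums

lemma norm_le_two_mul_of_norm_sum_le {E : Type*} [SeminormedAddCommGroup E] {f : ℕ → E}
    {g : ℝ → ℝ} {n : ℕ} (hn : n ≠ 0) (hg : ContinuousWithinAt g (Set.Iic n) n)
    (h : ∀ᶠ x in 𝓝[≤] (n : ℝ), ‖∑ k ∈ Icc 1 ⌊x⌋₊, f k‖ ≤ g x) : ‖f n‖ ≤ 2 * g n := by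
  obtain ⟨m, rfl⟩ := Nat.exists_eq_succ_of_ne_zero hn
  have hsucc : ‖∑ k ∈ Icc 1 (m + 1), f k‖ ≤ g (m + 1 : ℕ) := by
    simpa only [Nat.floor_natCast] using h.self_of_nhdsWithin Set.self_mem_Iic
  have hpred : ‖∑ k ∈ Icc 1 m, f k‖ ≤ g (m + 1 : ℕ) := by
    have hIio : 𝓝[<] ((m + 1 : ℕ) : ℝ) ≤ 𝓝[≤] ((m + 1 : ℕ) : ℝ) :=
      nhdsWithin_mono _ Set.Iio_subset_Iic_self
    refine ge_of_tendsto (hg.mono_left hIio) ?_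
    have hlt : (m : ℝ) < (m + 1 : ℕ) := by simp
    filter_upwards [hIio h, Ioo_mem_nhdsLT hlt] with x hx hmx
    have hfloor : ⌊x⌋₊ = m :=
      (Nat.floor_eq_iff (m.cast_nonneg.trans hmx.1.le)).2 ⟨hmx.1.le, by simpa using hmx.2⟩
    rwa [hfloor] at hx
  calc ‖f (m + 1)‖
      = ‖∑ k ∈ Icc 1 (m + 1), f k - ∑ k ∈ Icc 1 m, f k‖ := by
        rw [sum_Icc_succ_top (by lia), add_sub_cancel_left]
    _ ≤ ‖∑ k ∈ Icc 1 (m + 1), f k‖ + ‖∑ k ∈ Icc 1 m, f k‖ := norm_sub_le _ _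
    _ ≤ 2 * g (m + 1 : ℕ) := by rw [two_mul]; exact add_le_add hsucc hpred

lemma isBigO_one_div_mul_log_log_rpow_of_norm_sum_le {E : Type*} [SeminormedAddCommGroup E]
    {f : ℕ → E} {C s : ℝ} (h : ∀ᶠ x : ℝ in atTop,
      ‖∑ n ∈ Icc 1 ⌊x⌋₊, f n‖ ≤ C / (x * Real.log (Real.log x) ^ s)) :
    f =O[atTop] fun n : ℕ ↦ 1 / (n * Real.log (Real.log n) ^ s) := by
  have hcont {x : ℝ} (hx : 0 < x) (hll : 0 < Real.log (Real.log x)) :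
      ContinuousAt (fun x ↦ C / (x * Real.log (Real.log x) ^ s)) x := by
    have hl : Real.log x ≠ 0 := by rintro hl; simp [hl] at hll
    have hlog := (Real.continuousAt_log hx.ne').log hl
    exact continuousAt_const.div (continuousAt_id.mul (hlog.rpow_const (.inl hll.ne')))
      (by positivity)
  obtain ⟨X, hX⟩ := eventually_atTop.1 h
  have hcast := tendsto_natCast_atTop_atTop (R := ℝ)
  refine .of_bound (2 * |C|) ?_
  filter_upwards [hcast.eventually_gt_atTop X, eventually_ne_atTop 0,
    (tendsto_log_log_atTop.comp hcast).eventually_gt_atTop 0] with n hn hn₀ hll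
  have hn_pos : (0 : ℝ) < n := by positivity
  have hev : ∀ᶠ x in 𝓝[≤] (n : ℝ),
      ‖∑ k ∈ Icc 1 ⌊x⌋₊, f k‖ ≤ C / (x * Real.log (Real.log x) ^ s) :=
    nhdsWithin_le_nhds ((eventually_ge_nhds hn).mono hX)
  calc ‖f n‖
      ≤ 2 * (C / (n * Real.log (Real.log n) ^ s)) :=
        norm_le_two_mul_of_norm_sum_le hn₀ (hcont hn_pos hll).continuousWithinAt hev
    _ ≤ 2 * |C| * (1 / (n * Real.log (Real.log n) ^ s)) := by
        rw [mul_assoc, mul_one_div]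
        gcongr
        exact le_abs_self C
    _ ≤ 2 * |C| * ‖1 / (n * Real.log (Real.log n) ^ s)‖ := by
        gcongr
        exact Real.le_norm_self _

lemma one_div_mul_log_log_rpow_isBigO_one_div {s : ℝ} (hs : 0 ≤ s) :
    (fun n : ℕ ↦ 1 / (n * Real.log (Real.log n) ^ s)) =O[atTop] fun n : ℕ ↦ 1 / (n : ℝ) := by
  refine .of_bound' ?_
  filter_upwards [(tendsto_log_log_atTop.comp tendsto_natCast_atTop_atTop).eventually_ge_atTop 1,
    eventually_gt_atTop 0] with n hll hn
  have hrpow : 1 ≤ Real.log (Real.log n) ^ s := Real.one_le_rpow hll hs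
  have hn' : (0 : ℝ) < n := mod_cast hn
  rw [Real.norm_of_nonneg (by positivity), Real.norm_of_nonneg (by positivity)]
  gcongr
  exact le_mul_of_one_le_right hn'.le hrpow

end PartialSums

section MO

variable {f : ℕ → ℂ}

lemma IsMultFn.exists_arithmeticFunction (hf : IsMultFn f) :
    ∃ g : ArithmeticFunction ℂ, g.IsMultiplicative ∧ ∀ n ≠ 0, g n = f n := by
  refine ⟨⟨fun n ↦ if n = 0 then 0 else f n, if_pos rfl⟩, ?_, fun n hn ↦ if_neg hn⟩
  refine ArithmeticFunction.IsMultiplicative.iff_ne_zero.2 ⟨by simp [hf.1], fun hm hn hmn ↦ ?_⟩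
  simp [hm, hn, hf.2 _ _ hmn]

lemma IsMultFn.summable_of_isBigO_one_div (hf : IsMultFn f)
    (hO : f =O[atTop] fun n : ℕ ↦ 1 / (n : ℝ)) (hp : Summable fun p : Nat.Primes ↦ ‖f p‖) :
    Summable f := by
  obtain ⟨g, hg, hgf⟩ := hf.exists_arithmeticFunction
  have hev : g =ᶠ[atTop] f := (eventually_ne_atTop 0).mono hgf
  have hgp (p : Nat.Primes) : ‖f p‖ = ‖g p‖ := by rw [hgf p p.2.ne_zero]
  have hgs : Summable g :=
    (summable_norm_of_isBigO_one_div hg (hev.trans_isBigO hO) (hp.congr hgp)).of_norm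
  exact (summable_congr_atTop hev).1 hgs

lemma IsMO.not_summable (hf : IsMO f) : ¬ Summable f := by
  obtain ⟨hmul, hsum, hprime⟩ := hf
  obtain ⟨g, hg, hgf⟩ := hmul.exists_arithmeticFunction
  intro hs
  have hgs : Summable g := (summable_congr_atTop ((eventually_ne_atTop 0).mono hgf)).2 hs
  refine tsum_ne_zero_of_tsum_prime_pow_ne_zero hg hgs.norm (fun p hp ↦ ?_) ?_
  · obtain ⟨L, hL, hfL⟩ := hprime p hp
    have hgp : Summable fun k ↦ g (p ^ k) :=
      hgs.comp_injective (Nat.pow_right_injective hp.two_le)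
    have hgL : SeriesTendsTo (fun k ↦ g (p ^ k)) L := by
      simpa only [hgf _ (pow_ne_zero _ hp.ne_zero)] using hfL
    rwa [tendsto_nhds_unique hgp.hasSum.tendsto_sum_nat hgL]
  · have hg0 : SeriesTendsTo (fun n ↦ g (n + 1)) 0 := by
      simpa only [hgf _ (Nat.succ_ne_zero _)] using hsum
    rw [hgs.tsum_eq_zero_add, g.map_zero, zero_add]
    exact tendsto_nhds_unique ((summable_nat_add_iff 1).2 hgs).hasSum.tendsto_sum_nat hg0

end MO

theorem stmt6_general (f : ℕ → ℂ) (hf : IsMO f) {s : ℝ} (hs : 1 < s) :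
    ¬ ∃ C : ℝ, ∀ᶠ x : ℝ in atTop,
      ‖∑ n ∈ Icc 1 ⌊x⌋₊, f n‖ ≤ C / (x * Real.log (Real.log x) ^ s) := by
  rintro ⟨C, hC⟩
  have hO : f =O[atTop] fun n : ℕ ↦ 1 / (n * Real.log (Real.log n) ^ s) :=
    isBigO_one_div_mul_log_log_rpow_of_norm_sum_le hC
  have hp : Summable fun p : Nat.Primes ↦ ‖f p‖ := by
    refine summable_of_isBigO (summable_primes_one_div_mul_log_log_rpow hs) ?_
    exact hO.norm_left.comp_tendsto
      (Nat.cofinite_eq_atTop ▸ Nat.Primes.coe_nat_injective.tendsto_cofinite)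
  exact hf.not_summable <| hf.1.summable_of_isBigO_one_div
    (hO.trans (one_div_mul_log_log_rpow_isBigO_one_div (by positivity))) hp

theorem stmt6 (f : ℕ → ℂ) (hf : IsMO f) :
    ¬ ∃ C : ℝ, ∀ᶠ x : ℝ in Filter.atTop,
      ‖∑ n ∈ Finset.Icc 1 ⌊x⌋₊, f n‖ ≤ C / (x * Real.log (Real.log x) ^ 2) := by
  simpa only [Real.rpow_two] using stmt6_general f hf one_lt_two
end

section
/- If f : ℕ → ℂ is an MO function, then for every ε > 0 the partial sums satisfy ∑_{n ≤ x} f(n) = Ω(1/(x (log log x)^{1+ε})); that is, for each ε > 0 it is NOT the case that there exists a constant C such that |∑_{n ≤ x} f(n)| ≤ C/(x (log log x)^{1+ε}) for all sufficiently large x. -/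
open Filter Finset

/-
A bound `C / (x (log log x)^δ)` with `δ > 1` on the partial sums forces
`f n = O(1 / (n (log log n)^δ))`. Abel summation against Chebyshev's bound `θ(x) ≪ x` compares
`∑_p |f p|` with `∑_n 1 / (n log n (log log n)^δ)`, which converges exactly because `δ > 1`. The
higher prime powers are dominated by `∑_{k ≥ 2} p^{-k}`, so `∑ f` converges absolutely and equals
its Euler product. An absolutely convergent product without vanishing factors is nonzero, whereas
the partial sums tend to `0`.
-/

open Asymptotics Topology

lemma isBigO_natCast_of_isBigO_sum_Icc_floor {E : Type*} [SeminormedAddCommGroup E] {f : ℕ → E}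
    {B : ℝ → ℝ} (hB : ∀ᶠ x in atTop, ContinuousAt B x)
    (h : (fun x : ℝ ↦ ∑ n ∈ Icc 1 ⌊x⌋₊, f n) =O[atTop] B) :
    f =O[atTop] fun n : ℕ ↦ B n := by
  obtain ⟨C, hC⟩ := h.bound
  obtain ⟨X, hX⟩ := eventually_atTop.1 (hC.and hB)
  refine .of_bound (C + C) ?_
  filter_upwards [tendsto_natCast_atTop_atTop.eventually_ge_atTop (X + 1), eventually_ge_atTop 1]
    with n hn hn₁
  obtain ⟨m, rfl⟩ := Nat.exists_eq_add_of_le' hn₁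
  have hupper : ‖∑ j ∈ Icc 1 (m + 1), f j‖ ≤ C * ‖B (m + 1 : ℕ)‖ := by
    simpa only [Nat.floor_natCast] using (hX (m + 1 : ℕ) (by linarith)).1
  -- The partial sum is constant on `[m, m + 1)`, so its bound survives the limit `x → m + 1`.
  have hlower : ‖∑ j ∈ Icc 1 m, f j‖ ≤ C * ‖B (m + 1 : ℕ)‖ := by
    have hlim : Tendsto (fun x ↦ C * ‖B x‖) (𝓝[<] (m + 1 : ℕ)) (𝓝 (C * ‖B (m + 1 : ℕ)‖)) :=
      ((hX (m + 1 : ℕ) (by linarith)).2.norm.const_mul C).mono_left nhdsWithin_le_nhds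
    refine ge_of_tendsto hlim ?_
    have hm : (m : ℝ) < (m + 1 : ℕ) := by exact_mod_cast m.lt_succ_self
    filter_upwards [Ioo_mem_nhdsLT hm] with x ⟨hmx, hxm⟩
    push_cast at hn hxm
    have hfloor : ⌊x⌋₊ = m := (Nat.floor_eq_iff (m.cast_nonneg.trans hmx.le)).2 ⟨hmx.le, hxm⟩
    simpa only [hfloor] using (hX x (by linarith)).1
  calc ‖f (m + 1)‖ = ‖∑ j ∈ Icc 1 (m + 1), f j - ∑ j ∈ Icc 1 m, f j‖ := by
        rw [sum_Icc_succ_top (Nat.le_add_left 1 m), add_sub_cancel_left]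
    _ ≤ C * ‖B (m + 1 : ℕ)‖ + C * ‖B (m + 1 : ℕ)‖ := norm_sub_le_of_le hupper hlower
    _ = (C + C) * ‖B (m + 1 : ℕ)‖ := (add_mul ..).symm

lemma sum_mul_nonneg_of_antitone {c d : ℕ → ℝ} (hc : Antitone c) (hc₀ : ∀ n, 0 ≤ c n)
    (hd : ∀ n, 0 ≤ ∑ i ∈ range n, d i) (n : ℕ) : 0 ≤ ∑ i ∈ range n, d i * c i := by
  suffices c n * ∑ i ∈ range n, d i ≤ ∑ i ∈ range n, d i * c i from
    (mul_nonneg (hc₀ n) (hd n)).trans this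
  induction n with
  | zero => simp
  | succ n ih =>
    calc c (n + 1) * ∑ i ∈ range (n + 1), d i
        ≤ c n * ∑ i ∈ range (n + 1), d i :=
          mul_le_mul_of_nonneg_right (hc n.le_succ) (hd (n + 1))
      _ = c n * ∑ i ∈ range n, d i + d n * c n := by rw [sum_range_succ]; ring
      _ ≤ ∑ i ∈ range n, d i * c i + d n * c n := by gcongr
      _ = ∑ i ∈ range (n + 1), d i * c i := (sum_range_succ ..).symm

lemma summable_mul_of_antitone_of_sum_range_le {a c : ℕ → ℝ} {K : ℝ} (ha : ∀ n, 0 ≤ a n)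
    (hK : ∀ n : ℕ, ∑ i ∈ range n, a i ≤ K * n) (hc : Antitone c) (hs : Summable c) :
    Summable fun n ↦ a n * c n := by
  have hc₀ (n : ℕ) : 0 ≤ c n := hc.le_of_tendsto hs.tendsto_atTop_zero n
  have hK₀ : 0 ≤ K := by simpa using (ha 0).trans (by simpa using hK 1)
  refine summable_of_sum_range_le (c := K * ∑' n, c n) (fun n ↦ mul_nonneg (ha n) (hc₀ n))
    fun n ↦ ?_
  have habel : 0 ≤ ∑ i ∈ range n, (K - a i) * c i := by
    refine sum_mul_nonneg_of_antitone hc hc₀ (fun n ↦ ?_) n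
    simpa [sum_sub_distrib, mul_comm] using hK n
  calc ∑ i ∈ range n, a i * c i
      ≤ K * ∑ i ∈ range n, c i := by
        simpa only [sub_mul, sum_sub_distrib, ← mul_sum, sub_nonneg] using habel
    _ ≤ K * ∑' n, c n := by gcongr; exact hs.sum_le_tsum _ fun i _ ↦ hc₀ i

lemma sum_range_ite_prime_log_le (n : ℕ) :
    ∑ i ∈ range n, (if i.Prime then Real.log i else 0) ≤ Real.log 4 * n := by
  calc ∑ i ∈ range n, (if i.Prime then Real.log i else 0)
      ≤ ∑ i ∈ Icc 0 n, (if i.Prime then Real.log i else 0) := by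
        refine sum_le_sum_of_subset_of_nonneg (fun i hi ↦ ?_) fun i _ _ ↦ ?_
        · exact mem_Icc.2 ⟨i.zero_le, (mem_range.1 hi).le⟩
        · split_ifs
          exacts [Real.log_natCast_nonneg i, le_rfl]
    _ = Chebyshev.theta n := by
        rw [Chebyshev.theta_eq_sum_Icc, Nat.floor_natCast, sum_filter]
    _ ≤ Real.log 4 * n := Chebyshev.theta_le_log4_mul_x n.cast_nonneg

lemma summable_primes_log_mul_of_antitoneOn {c : ℕ → ℝ} {N : ℕ} (hc : AntitoneOn c (Set.Ici N))
    (hs : Summable c) : Summable fun p : Nat.Primes ↦ Real.log p * c p := by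
  have heq : (fun n ↦ c (max n N)) =ᶠ[atTop] c := by
    filter_upwards [eventually_ge_atTop N] with n hn
    rw [max_eq_left hn]
  have hanti : Antitone fun n ↦ c (max n N) := fun m n hmn ↦
    hc (Set.mem_Ici.2 (le_max_right m N)) (Set.mem_Ici.2 (le_max_right n N))
      (max_le_max_right N hmn)
  have hsum : Summable fun n : ℕ ↦ (if n.Prime then Real.log n else 0) * c (max n N) := by
    refine summable_mul_of_antitone_of_sum_range_le (fun n ↦ ?_) sum_range_ite_prime_log_le hanti
      (hs.congr_atTop heq.symm)
    split_ifs
    exacts [Real.log_natCast_nonneg n, le_rfl]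
  have hsum' : Summable fun n : ℕ ↦ (if n.Prime then Real.log n else 0) * c n :=
    hsum.congr_atTop (heq.mono fun n hn ↦ by simp only [hn])
  refine (hsum'.comp_injective Nat.Primes.coe_nat_injective).congr fun p ↦ ?_
  simp only [Function.comp_apply, if_pos p.2]

lemma integrableOn_Ioi_deriv_div_rpow {L L' : ℝ → ℝ} {a δ : ℝ} (hδ : 1 < δ)
    (hderiv : ∀ x ∈ Set.Ici a, HasDerivAt L (L' x) x) (hpos : ∀ x ∈ Set.Ici a, 0 < L x)
    (hL' : ∀ x ∈ Set.Ici a, 0 ≤ L' x) (hL : Tendsto L atTop atTop) :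
    MeasureTheory.IntegrableOn (fun x ↦ L' x / L x ^ δ) (Set.Ioi a) := by
  have hprim (x : ℝ) (hx : x ∈ Set.Ici a) :
      HasDerivAt (fun y ↦ L y ^ (1 - δ) / (1 - δ)) (L' x / L x ^ δ) x := by
    refine (((hderiv x hx).rpow_const (.inl (hpos x hx).ne')).div_const (1 - δ)).congr_deriv ?_
    have hδ' : 1 - δ ≠ 0 := sub_ne_zero.2 hδ.ne
    rw [sub_sub_cancel_left, Real.rpow_neg (hpos x hx).le]
    field_simp
  have hlim : Tendsto (fun y ↦ L y ^ (1 - δ) / (1 - δ)) atTop (𝓝 (0 / (1 - δ))) := by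
    simpa only [neg_sub, Function.comp_def] using
      ((tendsto_rpow_neg_atTop (sub_pos.2 hδ)).comp hL).div_const (1 - δ)
  refine MeasureTheory.integrableOn_Ioi_deriv_of_nonneg' hprim (fun x hx ↦ ?_) hlim
  have hx' := Set.mem_Ici_of_Ioi hx
  exact div_nonneg (hL' x hx') (Real.rpow_nonneg (hpos x hx').le δ)

lemma one_lt_log_of_three_le {x : ℝ} (hx : 3 ≤ x) : 1 < Real.log x :=
  (Real.lt_log_iff_exp_lt (by linarith)).2 (by linarith [Real.exp_one_lt_d9])

lemma antitoneOn_inv_mul_log_mul_log_log_rpow {δ : ℝ} (hδ : 0 ≤ δ) :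
    AntitoneOn (fun x : ℝ ↦ (x * Real.log x * Real.log (Real.log x) ^ δ)⁻¹) (Set.Ici 3) := by
  intro x (hx : 3 ≤ x) y _ hxy
  have hlog := one_lt_log_of_three_le hx
  have hloglog := Real.log_pos hlog
  have hy₀ : 0 < y := by linarith
  have hlogy : 0 < Real.log y := Real.log_pos (by linarith)
  dsimp only
  gcongr

lemma summable_inv_mul_log_mul_log_log_rpow {δ : ℝ} (hδ : 1 < δ) :
    Summable fun n : ℕ ↦ ((n : ℝ) * Real.log n * Real.log (Real.log n) ^ δ)⁻¹ := by
  have hx₀ (x : ℝ) (hx : x ∈ Set.Ici 3) : 0 < x := by linarith [Set.mem_Ici.1 hx]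
  have hlog (x : ℝ) (hx : x ∈ Set.Ici 3) : 1 < Real.log x := one_lt_log_of_three_le hx
  have hderiv (x : ℝ) (hx : x ∈ Set.Ici 3) :
      HasDerivAt (fun x ↦ Real.log (Real.log x)) (x⁻¹ / Real.log x) x :=
    (Real.hasDerivAt_log (hx₀ x hx).ne').log (by linarith [hlog x hx])
  have hint : MeasureTheory.IntegrableOn
      (fun x ↦ x⁻¹ / Real.log x / Real.log (Real.log x) ^ δ) (Set.Ioi 3) :=
    integrableOn_Ioi_deriv_div_rpow hδ hderiv (fun x hx ↦ Real.log_pos (hlog x hx))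
      (fun x hx ↦ div_nonneg (inv_nonneg.2 (hx₀ x hx).le) (by linarith [hlog x hx]))
      (Real.tendsto_log_atTop.comp Real.tendsto_log_atTop)
  have hweight (x : ℝ) : x⁻¹ / Real.log x / Real.log (Real.log x) ^ δ =
      (x * Real.log x * Real.log (Real.log x) ^ δ)⁻¹ := by
    simp only [mul_inv, div_eq_mul_inv]
  simp only [hweight] at hint
  have hthree : ((3 : ℕ) : ℝ) = 3 := Nat.cast_ofNat
  refine AntitoneOn.summable_of_integrableOn_Ioi (N := 3)
    (f := fun x : ℝ ↦ (x * Real.log x * Real.log (Real.log x) ^ δ)⁻¹)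
    (hthree ▸ antitoneOn_inv_mul_log_mul_log_log_rpow (by linarith)) (hthree ▸ hint)
    fun x hx ↦ ?_
  rw [hthree] at hx
  have hxlog := hlog x (Set.mem_Ici_of_Ioi hx)
  have hxloglog := Real.log_pos hxlog
  have hx₀ := hx₀ x (Set.mem_Ici_of_Ioi hx)
  positivity

lemma summable_primes_inv_mul_log_log_rpow {δ : ℝ} (hδ : 1 < δ) :
    Summable fun p : Nat.Primes ↦ ((p : ℝ) * Real.log (Real.log p) ^ δ)⁻¹ := by
  have hanti : AntitoneOn (fun n : ℕ ↦ ((n : ℝ) * Real.log n * Real.log (Real.log n) ^ δ)⁻¹)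
      (Set.Ici 3) := fun m hm n hn hmn ↦
    antitoneOn_inv_mul_log_mul_log_log_rpow (by linarith) (Set.mem_Ici.2 (mod_cast hm))
      (Set.mem_Ici.2 (mod_cast hn)) (mod_cast hmn)
  refine (summable_primes_log_mul_of_antitoneOn hanti
    (summable_inv_mul_log_mul_log_log_rpow hδ)).congr fun p ↦ ?_
  have hlog : Real.log p ≠ 0 := (Real.log_pos (mod_cast p.2.one_lt)).ne'
  field_simp

lemma isBigO_inv_mul_log_log_rpow {δ : ℝ} (hδ : 0 ≤ δ) :
    (fun x : ℝ ↦ (x * Real.log (Real.log x) ^ δ)⁻¹) =O[atTop] fun x ↦ x⁻¹ := by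
  refine IsBigO.of_norm_eventuallyLE ?_
  filter_upwards [eventually_gt_atTop 0,
    (Real.tendsto_log_atTop.comp Real.tendsto_log_atTop).eventually_ge_atTop 1] with x hx hloglog
  have hone : 1 ≤ Real.log (Real.log x) ^ δ := Real.one_le_rpow hloglog hδ
  rw [Real.norm_of_nonneg (by positivity)]
  exact inv_anti₀ hx (le_mul_of_one_le_right hx.le hone)

lemma continuousAt_inv_mul_log_log_rpow {x : ℝ} (hx : 3 ≤ x) (δ : ℝ) :
    ContinuousAt (fun x : ℝ ↦ (x * Real.log (Real.log x) ^ δ)⁻¹) x := by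
  have hx₀ : 0 < x := by linarith
  have hlog := one_lt_log_of_three_le hx
  have hloglog := Real.log_pos hlog
  have hlog_cont : ContinuousAt (fun x ↦ Real.log (Real.log x)) x :=
    (Real.continuousAt_log hx₀.ne').log (by linarith)
  exact (continuousAt_id.mul (hlog_cont.rpow_const (.inl hloglog.ne'))).inv₀
    (mul_pos hx₀ (Real.rpow_pos_of_pos hloglog δ)).ne'

lemma norm_apply_prime_pow_succ_le {E : Type*} [SeminormedAddCommGroup E] {f : ℕ → E} {M : ℝ}
    (hM : 0 ≤ M) (hf : ∀ n : ℕ, n ≠ 0 → ‖f n‖ ≤ M * (n : ℝ)⁻¹) {p : ℕ} (hp : 2 ≤ p) (k : ℕ) :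
    ‖f (p ^ (k + 1))‖ ≤ (‖f p‖ + 2 * M * ((p : ℝ) ^ 2)⁻¹) * (1 / 2) ^ k := by
  rcases k with _ | k
  · have : 0 ≤ 2 * M * ((p : ℝ) ^ 2)⁻¹ := by positivity
    simpa
  have hp₂ : (2 : ℝ) ≤ p := mod_cast hp
  calc ‖f (p ^ (k + 1 + 1))‖ ≤ M * ((p ^ (k + 1 + 1) : ℕ) : ℝ)⁻¹ :=
        hf _ (pow_ne_zero _ (by lia))
    _ = M * ((p : ℝ) ^ 2)⁻¹ * (p : ℝ)⁻¹ ^ k := by push_cast; rw [inv_pow]; ring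
    _ ≤ M * ((p : ℝ) ^ 2)⁻¹ * (2 : ℝ)⁻¹ ^ k := by gcongr
    _ = 2 * M * ((p : ℝ) ^ 2)⁻¹ * (1 / 2) ^ (k + 1) := by ring
    _ ≤ (‖f p‖ + 2 * M * ((p : ℝ) ^ 2)⁻¹) * (1 / 2) ^ (k + 1) := by
        gcongr
        exact le_add_of_nonneg_left (norm_nonneg _)

lemma summable_norm_prime_pow_of_isBigO_inv {E : Type*} [SeminormedAddCommGroup E] {f : ℕ → E}
    (hf : f =O[atTop] fun n : ℕ ↦ (n : ℝ)⁻¹) (hp : Summable fun p : Nat.Primes ↦ ‖f p‖) :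
    Summable fun q : Nat.Primes × ℕ ↦ ‖f (q.1 ^ (q.2 + 1))‖ := by
  obtain ⟨M, hM, hbound⟩ := bound_of_isBigO_nat_atTop hf
  have hbound' (n : ℕ) (hn : n ≠ 0) : ‖f n‖ ≤ M * (n : ℝ)⁻¹ := by
    simpa using hbound (inv_ne_zero (Nat.cast_ne_zero.2 hn))
  have hsq : Summable fun p : Nat.Primes ↦ 2 * M * ((p : ℝ) ^ 2)⁻¹ :=
    ((Real.summable_nat_pow_inv.2 one_lt_two).comp_injective
      Nat.Primes.coe_nat_injective).mul_left _
  exact .of_nonneg_of_le (fun _ ↦ norm_nonneg _)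
    (fun q ↦ norm_apply_prime_pow_succ_le hM.le hbound' q.1.2.two_le q.2)
    ((hp.add hsq).mul_of_nonneg summable_geometric_two
      (fun p ↦ show 0 ≤ _ by positivity) fun k ↦ show 0 ≤ _ by positivity)

lemma summable_norm_prime_pow_of_isBigO_inv_mul_log_log_rpow {E : Type*}
    [SeminormedAddCommGroup E] {f : ℕ → E} {δ : ℝ} (hδ : 1 < δ)
    (hf : f =O[atTop] fun n : ℕ ↦ ((n : ℝ) * Real.log (Real.log n) ^ δ)⁻¹) :
    Summable fun q : Nat.Primes × ℕ ↦ ‖f (q.1 ^ (q.2 + 1))‖ := by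
  have hinv : f =O[atTop] fun n : ℕ ↦ (n : ℝ)⁻¹ :=
    hf.trans ((isBigO_inv_mul_log_log_rpow (by linarith)).natCast_atTop)
  refine summable_norm_prime_pow_of_isBigO_inv hinv ?_
  rw [← Nat.cofinite_eq_atTop] at hf
  exact summable_of_isBigO (summable_primes_inv_mul_log_log_rpow hδ)
    (hf.norm_left.comp_tendsto Nat.Primes.coe_nat_injective.tendsto_cofinite)

section EulerProduct

variable {R : Type*} [NormedCommRing R] [NormOneClass R] [NormMulClass R]
  {f : ArithmeticFunction R}

lemma sum_range_norm_le_prod_primesBelow (hf : f.IsMultiplicative)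
    (hs : ∀ {p : ℕ}, p.Prime → Summable fun k : ℕ ↦ ‖f (p ^ k)‖) (N : ℕ) :
    ∑ n ∈ range N, ‖f n‖ ≤ ∏ p ∈ N.primesBelow, ∑' k : ℕ, ‖f (p ^ k)‖ := by
  have hprod : HasSum (N.smoothNumbers.indicator fun n ↦ ‖f n‖)
      (∏ p ∈ N.primesBelow, ∑' k : ℕ, ‖f (p ^ k)‖) :=
    hasSum_subtype_iff_indicator.1
      (EulerProduct.summable_and_hasSum_smoothNumbers_prod_primesBelow_tsum
        (f := fun n ↦ ‖f n‖) (by simp [hf.map_one])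
        (fun h ↦ by rw [hf.map_mul_of_coprime h, norm_mul])
        (fun hp ↦ by simpa only [norm_norm] using hs hp) N).2
  calc ∑ n ∈ range N, ‖f n‖ = ∑ n ∈ range N, N.smoothNumbers.indicator (fun n ↦ ‖f n‖) n := by
        refine sum_congr rfl fun n hn ↦ ?_
        rcases n.eq_zero_or_pos with rfl | hn₀
        · simp [Set.indicator_apply]
        · rw [Set.indicator_of_mem (Nat.mem_smoothNumbers_of_lt hn₀ (mem_range.1 hn))]
    _ ≤ ∏ p ∈ N.primesBelow, ∑' k : ℕ, ‖f (p ^ k)‖ :=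
        sum_le_hasSum _ (fun n _ ↦ Set.indicator_nonneg (fun n _ ↦ norm_nonneg (f n)) n) hprod

lemma summable_norm_of_summable_norm_prime_pow (hf : f.IsMultiplicative)
    (h : Summable fun q : Nat.Primes × ℕ ↦ ‖f (q.1 ^ (q.2 + 1))‖) : Summable fun n ↦ ‖f n‖ := by
  let T (p : ℕ) : ℝ := ∑' k : ℕ, ‖f (p ^ (k + 1))‖
  have hlocal {p : ℕ} (hp : p.Prime) : Summable fun k : ℕ ↦ ‖f (p ^ k)‖ :=
    (summable_nat_add_iff 1).1 (h.prod_factor (⟨p, hp⟩ : Nat.Primes))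
  refine summable_of_sum_range_le (c := Real.exp (∑' p : Nat.Primes, T p))
    (fun n ↦ norm_nonneg _) fun N ↦ ?_
  calc ∑ n ∈ range N, ‖f n‖
      ≤ ∏ p ∈ N.primesBelow, ∑' k : ℕ, ‖f (p ^ k)‖ :=
        sum_range_norm_le_prod_primesBelow hf hlocal N
    _ ≤ ∏ p ∈ N.primesBelow, Real.exp (T p) := by
        refine prod_le_prod (fun p _ ↦ tsum_nonneg fun k ↦ norm_nonneg _) fun p hp ↦ ?_
        rw [(hlocal (Nat.prime_of_mem_primesBelow hp)).tsum_eq_zero_add, pow_zero, hf.map_one,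
          norm_one, add_comm]
        exact Real.add_one_le_exp _
    _ = Real.exp (∑ p ∈ N.primesBelow.subtype Nat.Prime, T p) := by
        rw [← Real.exp_sum, sum_subtype_of_mem T fun p hp ↦ Nat.prime_of_mem_primesBelow hp]
    _ ≤ Real.exp (∑' p : Nat.Primes, T p) :=
        Real.exp_le_exp.2 <|
          Summable.sum_le_tsum (f := fun p : Nat.Primes ↦ T p) _
            (fun p _ ↦ tsum_nonneg fun k ↦ norm_nonneg _) h.prod

lemma tsum_ne_zero_of_summable_norm_prime_pow [CompleteSpace R] (hf : f.IsMultiplicative)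
    (h : Summable fun q : Nat.Primes × ℕ ↦ ‖f (q.1 ^ (q.2 + 1))‖)
    (hlocal : ∀ p : ℕ, p.Prime → ∑' k : ℕ, f (p ^ k) ≠ 0) : ∑' n, f n ≠ 0 := by
  have hsum := summable_norm_of_summable_norm_prime_pow hf h
  have hsplit (p : Nat.Primes) : ∑' k : ℕ, f (p ^ k) = 1 + ∑' k : ℕ, f (p ^ (k + 1)) := by
    have hp : Summable fun k : ℕ ↦ f (p ^ k) :=
      hsum.of_norm.comp_injective (Nat.pow_right_injective p.2.two_le)
    rw [hp.tsum_eq_zero_add, pow_zero, hf.map_one]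
  rw [← hf.eulerProduct_tprod hsum, tprod_congr hsplit]
  refine tprod_one_add_ne_zero_of_summable (fun p ↦ hsplit p ▸ hlocal p p.2) ?_
  exact .of_nonneg_of_le (fun p ↦ norm_nonneg _)
    (fun p ↦ norm_tsum_le_tsum_norm (h.prod_factor p)) h.prod

lemma not_tendsto_sum_Icc_floor_zero_of_summable_norm_prime_pow [CompleteSpace R]
    (hf : f.IsMultiplicative) (h : Summable fun q : Nat.Primes × ℕ ↦ ‖f (q.1 ^ (q.2 + 1))‖)
    (hlocal : ∀ p : ℕ, p.Prime → ¬ Tendsto (fun N ↦ ∑ k ∈ range N, f (p ^ k)) atTop (𝓝 0)) :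
    ¬ Tendsto (fun x : ℝ ↦ ∑ n ∈ Icc 1 ⌊x⌋₊, f n) atTop (𝓝 0) := by
  have hsum : Summable f := (summable_norm_of_summable_norm_prime_pow hf h).of_norm
  have hne : ∑' n, f n ≠ 0 := by
    refine tsum_ne_zero_of_summable_norm_prime_pow hf h fun p hp h₀ ↦ hlocal p hp ?_
    have hp_sum : Summable fun k : ℕ ↦ f (p ^ k) :=
      hsum.comp_injective (Nat.pow_right_injective hp.two_le)
    exact h₀ ▸ hp_sum.hasSum.tendsto_sum_nat
  have hlim : Tendsto (fun x : ℝ ↦ ∑ n ∈ Icc 1 ⌊x⌋₊, f n) atTop (𝓝 (∑' n, f n)) := by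
    refine ((hsum.hasSum.tendsto_sum_nat.comp (tendsto_add_atTop_nat 1)).comp
      tendsto_nat_floor_atTop).congr fun x ↦ ?_
    rw [Function.comp_apply, Function.comp_apply, range_eq_Ico,
      sum_eq_sum_Ico_succ_bot (Nat.add_one_pos _), f.map_zero, zero_add, zero_add,
      Ico_add_one_right_eq_Icc]
  exact fun h₀ ↦ hne (tendsto_nhds_unique hlim h₀)

end EulerProduct

theorem stmt7_general {R : Type*} [NormedCommRing R] [NormOneClass R] [NormMulClass R]
    [CompleteSpace R] {f : ℕ → R} (hf₁ : f 1 = 1)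
    (hmul : ∀ m n : ℕ, Nat.Coprime m n → f (m * n) = f m * f n)
    (hlocal : ∀ p : ℕ, p.Prime → ¬ Tendsto (fun N ↦ ∑ k ∈ range N, f (p ^ k)) atTop (𝓝 0))
    {δ : ℝ} (hδ : 1 < δ) :
    ¬ ∃ C : ℝ, ∀ᶠ x : ℝ in atTop,
      ‖∑ n ∈ Icc 1 ⌊x⌋₊, f n‖ ≤ C / (x * Real.log (Real.log x) ^ δ) := by
  rintro ⟨C, hC⟩
  have hF {n : ℕ} (hn : n ≠ 0) : toArithmeticFunction f n = f n := if_neg hn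
  have hmult : (toArithmeticFunction f).IsMultiplicative := by
    rw [ArithmeticFunction.IsMultiplicative.iff_ne_zero]
    refine ⟨(hF one_ne_zero).trans hf₁, fun hm hn h ↦ ?_⟩
    rw [hF (mul_ne_zero hm hn), hF hm, hF hn, hmul _ _ h]
  have hsum (x : ℝ) : ∑ n ∈ Icc 1 ⌊x⌋₊, f n = ∑ n ∈ Icc 1 ⌊x⌋₊, toArithmeticFunction f n :=
    sum_congr rfl fun n hn ↦ (hF (Nat.one_le_iff_ne_zero.1 (mem_Icc.1 hn).1)).symm
  have hO : (fun x : ℝ ↦ ∑ n ∈ Icc 1 ⌊x⌋₊, toArithmeticFunction f n) =O[atTop]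
      fun x ↦ (x * Real.log (Real.log x) ^ δ)⁻¹ := by
    simp only [hsum, div_eq_mul_inv] at hC
    exact (IsBigO.of_norm_eventuallyLE hC).trans (isBigO_const_mul_self C _ _)
  have hpow := summable_norm_prime_pow_of_isBigO_inv_mul_log_log_rpow hδ <|
    isBigO_natCast_of_isBigO_sum_Icc_floor
      ((eventually_ge_atTop 3).mono fun x hx ↦ continuousAt_inv_mul_log_log_rpow hx δ) hO
  refine not_tendsto_sum_Icc_floor_zero_of_summable_norm_prime_pow hmult hpow (fun p hp ↦ ?_) <|
    (hO.trans (isBigO_inv_mul_log_log_rpow (by linarith))).trans_tendsto tendsto_inv_atTop_zero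
  simpa only [hF (pow_ne_zero _ hp.ne_zero)] using hlocal p hp

theorem stmt7 (f : ℕ → ℂ) (hf : IsMO f) :
    ∀ ε : ℝ, 0 < ε →
      ¬ ∃ C : ℝ, ∀ᶠ x : ℝ in Filter.atTop,
        ‖∑ n ∈ Finset.Icc 1 ⌊x⌋₊, f n‖ ≤ C / (x * Real.log (Real.log x) ^ (1 + ε)) := by
  obtain ⟨⟨hf₁, hmul⟩, -, hlocal⟩ := hf
  refine fun ε hε ↦ stmt7_general hf₁ hmul (fun p hp h₀ ↦ ?_) (lt_add_of_pos_right 1 hε)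
  obtain ⟨L, hL₀, hL⟩ := hlocal p hp
  exact hL₀ (tendsto_nhds_unique hL h₀)
end

section
/- The function n ↦ μ(n)/n, where μ is the Möbius function, is an MO function: it is multiplicative, the series ∑_{n=1}^∞ μ(n)/n converges to 0, and for every prime p the series ∑_{k=0}^∞ μ(p^k)/p^k converges to 1 − 1/p ≠ 0. -/
open Filter Finset

/-!
The partial sums `S(N) = ∑_{n ≤ N} μ(n)/n` are bounded, because `∑_{n ≤ N} μ(n) ⌊N/n⌋ = 1` and each
`⌊N/n⌋` differs from `N/n` by at most `1`. In the logarithmic scale `u = log N` they are slowly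
oscillating, because the coefficients are `O(1/n)`. By partial summation the Laplace transform of
`u ↦ S(⌊exp u⌋)` is `1 / (s ζ(1 + s))`, which extends continuously to `0 ≤ Re s` because `ζ` has a
simple pole at `1` and no zero on the line `Re s = 1`.

A bounded slowly oscillating function with such a Laplace transform tends to `0`. Indeed, convolving
it with a kernel whose Fourier transform has compact support yields an integral over a compact piece
of the line `Re s = 0`, which tends to `0` by the Riemann–Lebesgue lemma; and by slow oscillation
the convolution with a sufficiently concentrated kernel is uniformly close to the function.
-/

section FourierTransform

open MeasureTheory Topology
open scoped FourierTransform RealInnerProductSpace SchwartzMap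

variable {E : Type*} [NormedAddCommGroup E] [NormedSpace ℂ E]

lemma integral_fourierInv_sub_smul {V : Type*} [NormedAddCommGroup V] [InnerProductSpace ℝ V]
    [FiniteDimensional ℝ V] [MeasurableSpace V] [BorelSpace V] [CompleteSpace E]
    {φ : V → ℂ} {f : V → E} (hφ : Integrable φ) (hf : Integrable f) (x : V) :
    ∫ u, 𝓕⁻ φ (x - u) • f u = 𝓕⁻ (fun t => φ t • 𝓕 f t) x := by
  have hshift (u : V) : 𝓕⁻ φ (x - u) = 𝓕 (fun t => Real.fourierChar ⟪t, x⟫ • φ t) u := by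
    rw [Real.fourierInv_eq, Real.fourier_eq]
    simp_rw [inner_sub_right, sub_eq_neg_add, AddChar.map_add_eq_mul, mul_smul]
  have hmod : Integrable fun t => Real.fourierChar ⟪t, x⟫ • φ t := by
    simpa using (Real.fourierIntegral_convergent_iff (-x)).2 hφ
  calc ∫ u, 𝓕⁻ φ (x - u) • f u
      = ∫ u, 𝓕 (fun t => Real.fourierChar ⟪t, x⟫ • φ t) u • f u := by simp only [hshift]
    _ = ∫ t, (Real.fourierChar ⟪t, x⟫ • φ t) • 𝓕 f t := by
      simpa using! VectorFourier.integral_fourierIntegral_smul_eq_flip (L := innerₗ V)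
        Real.continuous_fourierChar continuous_inner hmod hf
    _ = 𝓕⁻ (fun t => φ t • 𝓕 f t) x := by
      simp only [Real.fourierInv_eq, smul_assoc]

lemma fourierInv_comp_mul_right (f : ℝ → E) {c : ℝ} (hc : c ≠ 0) (v : ℝ) :
    𝓕⁻ (fun t => f (t * c)) v = |c⁻¹| • 𝓕⁻ f (v / c) := by
  rw [Real.fourierInv_eq, Real.fourierInv_eq, ← Measure.integral_comp_mul_right]
  refine integral_congr_ae (.of_forall fun t => ?_)
  simp only [RCLike.inner_apply, conj_trivial]
  congr 2
  field_simp

lemma tendsto_fourierInv_atTop (f : ℝ → E) : Tendsto (𝓕⁻ f) atTop (𝓝 0) := by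
  rw [Real.fourierInv_eq_fourier_comp_neg]
  exact (Real.zero_at_infty_fourier _).mono_left atTop_le_cocompact

lemma integral_fourierInv_schwartzMap [CompleteSpace E] (φ : 𝓢(ℝ, E)) : ∫ v, 𝓕⁻ φ v = φ 0 := by
  have h : 𝓕 (𝓕⁻ φ) 0 = φ 0 := by rw [FourierTransform.fourier_fourierInv_eq]
  rw [SchwartzMap.fourier_coe, Real.fourier_eq] at h
  simpa only [inner_zero_right, neg_zero, AddChar.map_zero_eq_one, one_smul] using h

lemma exists_schwartzMap_hasCompactSupport_apply_zero :
    ∃ φ : 𝓢(ℝ, ℂ), HasCompactSupport φ ∧ φ 0 = 1 := by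
  let b : ContDiffBump (0 : ℝ) := ⟨1, 2, one_pos, one_lt_two⟩
  have hsupp : HasCompactSupport fun t => (b t : ℂ) :=
    b.hasCompactSupport.comp_left (g := Complex.ofReal) Complex.ofReal_zero
  refine ⟨hsupp.toSchwartzMap (Complex.ofRealCLM.contDiff.comp b.contDiff), hsupp, ?_⟩
  exact Complex.ofReal_eq_one.2 (b.one_of_mem_closedBall (Metric.mem_closedBall_self one_pos.le))

lemma exists_bandlimited_approx_identity :
    ∃ B : ℝ, ∀ η > 0, ∃ φ : 𝓢(ℝ, ℂ), HasCompactSupport φ ∧ ∫ v, 𝓕⁻ φ v = 1 ∧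
      ∫ v, ‖𝓕⁻ φ v‖ ≤ B ∧ ∫ v, |v| * ‖𝓕⁻ φ v‖ ≤ η := by
  obtain ⟨φ, hφ, hφ0⟩ := exists_schwartzMap_hasCompactSupport_apply_zero
  set A := ∫ v, |v| * ‖𝓕⁻ φ v‖
  have hA : 0 < A + 1 := add_pos_of_nonneg_of_pos (integral_nonneg fun v => by positivity) one_pos
  refine ⟨∫ v, ‖𝓕⁻ φ v‖, fun η hη => ?_⟩
  obtain ⟨c, hc, hcA⟩ : ∃ c > 0, c * A ≤ η :=
    ⟨η / (A + 1), div_pos hη hA, by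
      rw [div_mul_eq_mul_div, div_le_iff₀ hA]
      gcongr
      exact le_add_of_nonneg_right zero_le_one⟩
  -- Replacing `φ` by `t ↦ φ (t * c)` preserves the `L¹` norm of `𝓕⁻ φ` and scales its first
  -- absolute moment by `c`.
  let e := ContinuousLinearEquiv.unitsEquivAut ℝ (Units.mk0 c hc.ne')
  let ψ : 𝓢(ℝ, ℂ) := SchwartzMap.compCLMOfContinuousLinearEquiv ℂ e φ
  have hψ (v : ℝ) : ‖𝓕⁻ ψ v‖ = c⁻¹ * ‖𝓕⁻ φ (v / c)‖ := by
    rw [SchwartzMap.fourierInv_coe, SchwartzMap.fourierInv_coe,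
      show ⇑ψ = fun t => φ (t * c) from rfl, fourierInv_comp_mul_right _ hc.ne', norm_smul]
    simp [abs_of_pos hc]
  refine ⟨ψ, hφ.comp_homeomorph e.toHomeomorph, ?_, ?_, ?_⟩
  · rw [integral_fourierInv_schwartzMap, SchwartzMap.compCLMOfContinuousLinearEquiv_apply,
      Function.comp_apply, map_zero, hφ0]
  · simp_rw [hψ]
    rw [integral_const_mul, Measure.integral_comp_div (fun v => ‖𝓕⁻ φ v‖), abs_of_pos hc,
      smul_eq_mul, inv_mul_cancel_left₀ hc.ne']
  · simp_rw [hψ]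
    calc ∫ v, |v| * (c⁻¹ * ‖𝓕⁻ φ (v / c)‖) = ∫ v, |v / c| * ‖𝓕⁻ φ (v / c)‖ := by
          simp_rw [abs_div, abs_of_pos hc, div_eq_mul_inv, mul_assoc]
      _ = c * A := by
          rw [Measure.integral_comp_div (fun v => |v| * ‖𝓕⁻ φ v‖), abs_of_pos hc, smul_eq_mul]
      _ ≤ η := hcA

lemma setIntegral_smul_eq_integral_smul_indicator {α : Type*} [MeasurableSpace α] {μ : Measure α}
    {s : Set α} (hs : MeasurableSet s) (g : α → ℂ) (f : α → E) :
    ∫ a in s, g a • f a ∂μ = ∫ a, g a • s.indicator f a ∂μ := by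
  rw [← integral_indicator hs, Set.indicator_smul]

lemma tendsto_setIntegral_Ioi_exp_neg_mul_smul {h : ℝ → E} (hh : IntegrableOn h (Set.Ioi 0)) :
    Tendsto (fun ε : ℝ => ∫ u in Set.Ioi (0 : ℝ), Complex.exp (-(ε * u)) • h u) (𝓝[>] 0)
      (𝓝 (∫ u in Set.Ioi (0 : ℝ), h u)) := by
  refine tendsto_integral_filter_of_dominated_convergence (‖h ·‖) ?_ ?_ hh.norm ?_
  · exact .of_forall fun ε => .smul (Continuous.aestronglyMeasurable (by fun_prop)) hh.1
  · filter_upwards [self_mem_nhdsWithin] with ε hε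
    filter_upwards [ae_restrict_mem measurableSet_Ioi] with u hu
    rw [norm_smul, Complex.norm_exp]
    refine mul_le_of_le_one_left (norm_nonneg _) (Real.exp_le_one_iff.2 ?_)
    simpa using (mul_pos (Set.mem_Ioi.1 hε) (Set.mem_Ioi.1 hu)).le
  · refine .of_forall fun u => ?_
    have hcont : Continuous fun ε : ℝ => Complex.exp (-(ε * u)) • h u := by fun_prop
    simpa using (hcont.tendsto 0).mono_left nhdsWithin_le_nhds

lemma fourier_indicator_Ioi_exp_neg_mul_smul (F : ℝ → E) (ε t : ℝ) :
    𝓕 ((Set.Ioi 0).indicator fun u : ℝ => Complex.exp (-(ε * u)) • F u) t =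
      ∫ u in Set.Ioi (0 : ℝ), Complex.exp (-((ε + 2 * Real.pi * t * Complex.I) * u)) • F u := by
  rw [Real.fourier_real_eq_integral_exp_smul,
    ← setIntegral_smul_eq_integral_smul_indicator measurableSet_Ioi]
  simp only [smul_smul, ← Complex.exp_add]
  congr! 4
  push_cast
  ring

lemma continuousOn_fourierInv_smul_Ici {φ : ℝ → ℂ} {G : ℂ → E} (hφ : Continuous φ)
    (hφc : HasCompactSupport φ) (hG : ContinuousOn G {s | 0 ≤ s.re}) (x : ℝ) :
    ContinuousOn (fun ε : ℝ => 𝓕⁻ (fun t => φ t • G (ε + 2 * Real.pi * t * Complex.I)) x)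
      (Set.Ici 0) := by
  simp_rw [Real.fourierInv_eq']
  refine continuousOn_integral_of_compact_support hφc ?_ fun ε t _ ht => ?_
  · refine .smul (by fun_prop) (.smul (by fun_prop) (hG.comp (by fun_prop) fun p hp => ?_))
    simpa using hp.1
  · simp [image_eq_zero_of_notMem_tsupport ht]

lemma setIntegral_Ioi_fourierInv_sub_smul_of_laplace [CompleteSpace E] {φ : 𝓢(ℝ, ℂ)}
    {F : ℝ → E} {G : ℂ → E} {C : ℝ} (hφ : HasCompactSupport φ)
    (hF : AEStronglyMeasurable F (volume.restrict (Set.Ioi 0))) (hC : ∀ u > 0, ‖F u‖ ≤ C)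
    (hG : ContinuousOn G {s | 0 ≤ s.re})
    (hL : ∀ s : ℂ, 0 < s.re → ∫ u in Set.Ioi (0 : ℝ), Complex.exp (-(s * u)) • F u = G s) (x : ℝ) :
    ∫ u in Set.Ioi (0 : ℝ), 𝓕⁻ φ (x - u) • F u =
      𝓕⁻ (fun t : ℝ => φ t • G (2 * Real.pi * t * Complex.I)) x := by
  have hbound : ∀ᵐ u ∂volume.restrict (Set.Ioi (0 : ℝ)), ‖F u‖ ≤ C := by
    filter_upwards [ae_restrict_mem measurableSet_Ioi] with u hu using hC u hu
  have hlim : Tendsto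
      (fun ε : ℝ => ∫ u in Set.Ioi (0 : ℝ), Complex.exp (-(ε * u)) • 𝓕⁻ φ (x - u) • F u) (𝓝[>] 0)
      (𝓝 (∫ u in Set.Ioi (0 : ℝ), 𝓕⁻ φ (x - u) • F u)) := by
    refine tendsto_setIntegral_Ioi_exp_neg_mul_smul ?_
    exact ((𝓕⁻ φ).integrable.comp_sub_left x).integrableOn.smul_bdd C hF hbound
  have hlim' := (continuousOn_fourierInv_smul_Ici φ.continuous hφ hG x 0
    Set.self_mem_Ici).mono_left (nhdsWithin_mono 0 Set.Ioi_subset_Ici_self)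
  simp only [Complex.ofReal_zero, zero_add] at hlim'
  refine tendsto_nhds_unique (hlim.congr' ?_) hlim'
  filter_upwards [self_mem_nhdsWithin] with ε (hε : 0 < ε)
  set Fε := (Set.Ioi (0 : ℝ)).indicator fun u : ℝ => Complex.exp (-(ε * u)) • F u
  have hFε : Integrable Fε := by
    refine IntegrableOn.integrable_indicator ?_ measurableSet_Ioi
    refine Integrable.smul_bdd ?_ C hF hbound
    simpa using! (exp_neg_integrableOn_Ioi 0 hε).ofReal (𝕜 := ℂ)
  have hGε (t : ℝ) : 𝓕 Fε t = G (ε + 2 * Real.pi * t * Complex.I) := by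
    rw [fourier_indicator_Ioi_exp_neg_mul_smul, hL _ (by simpa using hε)]
  calc ∫ u in Set.Ioi (0 : ℝ), Complex.exp (-(ε * u)) • 𝓕⁻ φ (x - u) • F u
      = ∫ u, 𝓕⁻ φ (x - u) • Fε u := by
        rw [← setIntegral_smul_eq_integral_smul_indicator measurableSet_Ioi]
        simp only [smul_comm (𝓕⁻ φ _)]
    _ = 𝓕⁻ (fun t => φ t • 𝓕 Fε t) x := by
        rw [SchwartzMap.fourierInv_coe]
        exact integral_fourierInv_sub_smul φ.integrable hFε x
    _ = _ := by simp_rw [hGε]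

lemma norm_sub_integral_sub_smul_le [CompleteSpace E] {K : ℝ → ℂ} {f : ℝ → E} {x ε M : ℝ}
    (hK : Integrable K) (hK' : Integrable fun v => |v| * ‖K v‖) (hK1 : ∫ v, K v = 1)
    (hf : AEStronglyMeasurable f) (hfx : ∀ y, ‖f x - f y‖ ≤ ε + M * |x - y|) :
    ‖f x - ∫ u, K (x - u) • f u‖ ≤ ε * (∫ v, ‖K v‖) + M * ∫ v, |v| * ‖K v‖ := by
  set D : ℝ → E := fun v => K v • (f x - f (x - v))
  have hD_le (v : ℝ) : ‖D v‖ ≤ ε * ‖K v‖ + M * (|v| * ‖K v‖) := by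
    have hv := hfx (x - v)
    rw [sub_sub_cancel] at hv
    calc ‖D v‖ = ‖K v‖ * ‖f x - f (x - v)‖ := norm_smul _ _
      _ ≤ ‖K v‖ * (ε + M * |v|) := by gcongr
      _ = _ := by ring
  have hbound : Integrable fun v => ε * ‖K v‖ + M * (|v| * ‖K v‖) :=
    (hK.norm.const_mul ε).add (hK'.const_mul M)
  have hD : Integrable D := by
    refine hbound.mono' (hK.1.smul (aestronglyMeasurable_const.sub ?_)) (.of_forall hD_le)
    exact hf.comp_quasiMeasurePreserving (quasiMeasurePreserving_sub_left volume x)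
  have hsub : f x - ∫ u, K (x - u) • f u = ∫ v, D v := by
    calc f x - ∫ u, K (x - u) • f u = (∫ v, K v • f x) - ∫ v, K v • f (x - v) := by
          rw [integral_smul_const, hK1, one_smul,
            ← integral_sub_left_eq_self (fun v => K v • f (x - v)) volume x]
          simp only [sub_sub_cancel]
      _ = (∫ v, K v • f x) - ∫ v, (K v • f x - D v) := by simp only [D, smul_sub, sub_sub_cancel]
      _ = ∫ v, D v := by rw [integral_sub (hK.smul_const _) hD, sub_sub_cancel]
  calc ‖f x - ∫ u, K (x - u) • f u‖ = ‖∫ v, D v‖ := by rw [hsub]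
    _ ≤ ∫ v, (ε * ‖K v‖ + M * (|v| * ‖K v‖)) :=
        norm_integral_le_of_norm_le hbound (.of_forall hD_le)
    _ = _ := by
        rw [integral_add (hK.norm.const_mul ε) (hK'.const_mul M), integral_const_mul,
          integral_const_mul]

end FourierTransform

section SlowlyOscillating

open MeasureTheory Topology
open scoped FourierTransform SchwartzMap

variable {E : Type*} [NormedAddCommGroup E]

/-- `F` is slowly oscillating in the sense of Schmidt: `F (x + h) - F x → 0` as `x → ∞` and `h → 0`
jointly. It is the Tauberian condition that recovers the limit of `F` from those of its averages.
This is the additive form; Schmidt's condition on a sequence `s` is the present one for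
`u ↦ s ⌊exp u⌋₊`. -/
def IsSlowlyOscillating (F : ℝ → E) : Prop :=
  Tendsto (fun p : ℝ × ℝ => F (p.1 + p.2) - F p.1) (atTop ×ˢ 𝓝 0) (𝓝 0)

namespace IsSlowlyOscillating

variable {F F' : ℝ → E} {C : ℝ}

lemma congr' (hF : IsSlowlyOscillating F) (h : F =ᶠ[atTop] F') : IsSlowlyOscillating F' := by
  refine Tendsto.congr' ?_ hF
  filter_upwards [(tendsto_fst.atTop_add tendsto_snd).eventually h, tendsto_fst.eventually h]
    with p hadd hfst
  rw [hadd, hfst]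

lemma exists_eventually_norm_sub_le (hF : IsSlowlyOscillating F) (hC : ∀ x, ‖F x‖ ≤ C)
    {ε : ℝ} (hε : 0 < ε) : ∃ M > 0, ∀ᶠ x in atTop, ∀ y, ‖F x - F y‖ ≤ ε + M * |x - y| := by
  obtain ⟨P, hP, Q, hQ, hPQ⟩ := eventually_prod_iff.1 (hF.norm.eventually_le_const (by simpa))
  obtain ⟨δ, hδ, hδQ⟩ := Metric.eventually_nhds_iff.1 hQ
  have hC0 : 0 ≤ C := (norm_nonneg _).trans (hC 0)
  refine ⟨2 * (C + 1) / δ, by positivity, ?_⟩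
  filter_upwards [hP] with x hx y
  rcases lt_or_ge |x - y| δ with hxy | hxy
  · have hnear : ‖F y - F x‖ ≤ ε := by
      simpa using hPQ hx (hδQ (y := y - x) (by simpa [abs_sub_comm] using hxy))
    rw [norm_sub_rev]
    exact hnear.trans (le_add_of_nonneg_right (by positivity))
  · calc ‖F x - F y‖ ≤ C + C := (norm_sub_le _ _).trans (add_le_add (hC x) (hC y))
      _ ≤ 2 * (C + 1) / δ * δ := by rw [div_mul_cancel₀ _ hδ.ne']; linarith
      _ ≤ ε + 2 * (C + 1) / δ * |x - y| := by
          have : 2 * (C + 1) / δ * δ ≤ 2 * (C + 1) / δ * |x - y| := by gcongr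
          linarith

variable [NormedSpace ℂ E]

theorem tendsto_zero_of_tendsto_integral_fourierInv [CompleteSpace E]
    (hF : IsSlowlyOscillating F) (hFm : AEStronglyMeasurable F) (hC : ∀ x, ‖F x‖ ≤ C)
    (hlim : ∀ φ : 𝓢(ℝ, ℂ), HasCompactSupport φ →
      Tendsto (fun x => ∫ u, 𝓕⁻ φ (x - u) • F u) atTop (𝓝 0)) :
    Tendsto F atTop (𝓝 0) := by
  obtain ⟨B, hB⟩ := exists_bandlimited_approx_identity
  have hB0 : 0 ≤ B := by
    obtain ⟨φ, -, -, hφB, -⟩ := hB 1 one_pos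
    exact (integral_nonneg fun v => norm_nonneg _).trans hφB
  refine Metric.tendsto_nhds.2 fun ε hε => ?_
  simp_rw [dist_zero_right]
  obtain ⟨M, hM, hosc⟩ :=
    hF.exists_eventually_norm_sub_le hC (ε := ε / (3 * (B + 1))) (by positivity)
  obtain ⟨φ, hφ, hφ1, hφB, hφη⟩ := hB (ε / (3 * M)) (by positivity)
  have hmoment : Integrable fun v => |v| * ‖𝓕⁻ φ v‖ := by
    simpa using (𝓕⁻ φ : 𝓢(ℝ, ℂ)).integrable_pow_mul volume 1
  filter_upwards [hosc, (hlim φ hφ).norm.eventually_lt_const (u := ε / 3) (by simpa)]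
    with x hx hsmall
  calc ‖F x‖ ≤ ‖F x - ∫ u, 𝓕⁻ φ (x - u) • F u‖ + ‖∫ u, 𝓕⁻ φ (x - u) • F u‖ :=
        norm_le_norm_sub_add _ _
    _ < ε / (3 * (B + 1)) * (∫ v, ‖𝓕⁻ φ v‖) + M * (∫ v, |v| * ‖𝓕⁻ φ v‖) + ε / 3 :=
        add_lt_add_of_le_of_lt
          (norm_sub_integral_sub_smul_le (𝓕⁻ φ).integrable hmoment hφ1 hFm hx) hsmall
    _ ≤ ε / (3 * (B + 1)) * (B + 1) + M * (ε / (3 * M)) + ε / 3 := by gcongr; linarith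
    _ = ε := by field_simp; ring

theorem tendsto_zero_of_laplace [CompleteSpace E] {G : ℂ → E} (hF : IsSlowlyOscillating F)
    (hFm : AEStronglyMeasurable F (volume.restrict (Set.Ioi 0))) (hC : ∀ u > 0, ‖F u‖ ≤ C)
    (hG : ContinuousOn G {s | 0 ≤ s.re})
    (hL : ∀ s : ℂ, 0 < s.re → ∫ u in Set.Ioi (0 : ℝ), Complex.exp (-(s * u)) • F u = G s) :
    Tendsto F atTop (𝓝 0) := by
  set f := (Set.Ioi (0 : ℝ)).indicator F
  have hfF : F =ᶠ[atTop] f := by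
    filter_upwards [eventually_gt_atTop 0] with x hx using (Set.indicator_of_mem hx F).symm
  have hfm : AEStronglyMeasurable f := (aestronglyMeasurable_indicator_iff measurableSet_Ioi).2 hFm
  have hfC (u : ℝ) : ‖f u‖ ≤ C := by
    by_cases hu : u ∈ Set.Ioi 0
    · simpa [f, hu] using hC u hu
    · simpa [f, hu] using (norm_nonneg _).trans (hC 1 one_pos)
  refine Tendsto.congr' hfF.symm <|
    (hF.congr' hfF).tendsto_zero_of_tendsto_integral_fourierInv hfm hfC fun φ hφ => ?_
  refine (tendsto_fourierInv_atTop
    fun t : ℝ => φ t • G (2 * Real.pi * t * Complex.I)).congr fun x => ?_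
  rw [← setIntegral_Ioi_fourierInv_sub_smul_of_laplace hφ hFm hC hG hL,
    setIntegral_smul_eq_integral_smul_indicator measurableSet_Ioi]

end IsSlowlyOscillating

end SlowlyOscillating

section DirichletSeries

open MeasureTheory Topology

lemma LSeries_eq_mul_integral_exp_neg_mul_smul (f : ℕ → ℂ) {r : ℝ} (hr : 0 ≤ r) {s : ℂ}
    (hs : r < s.re) (hS : LSeriesSummable f s)
    (hO : (fun n => ∑ k ∈ Icc 1 n, f k) =O[atTop] fun n => (n : ℝ) ^ r) :
    LSeries f s =
      s * ∫ u in Set.Ioi (0 : ℝ), Complex.exp (-(s * u)) • ∑ k ∈ Icc 1 ⌊Real.exp u⌋₊, f k := by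
  have hpow (u : ℝ) :
      Real.exp u • (Real.exp u : ℂ) ^ (-(s + 1)) = Complex.exp (-(s * u)) := by
    rw [Complex.cpow_def_of_ne_zero (Complex.ofReal_ne_zero.2 (Real.exp_ne_zero u)),
      ← Complex.ofReal_log (Real.exp_pos u).le, Real.log_exp, Complex.real_smul,
      Complex.ofReal_exp, ← Complex.exp_add]
    congr 1
    ring
  rw [LSeries_eq_mul_integral f hr hs hS hO, ← Real.exp_zero, ← integral_comp_exp_Ioi]
  simp_rw [← mul_smul_comm, hpow, smul_eq_mul, mul_comm]

lemma norm_sum_Icc_floor_exp_sub_le {E : Type*} [NormedAddCommGroup E] {a : ℕ → E} {C : ℝ}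
    (ha : ∀ n ≠ 0, ‖a n‖ ≤ C / n) {x y : ℝ} (hxy : x ≤ y) :
    ‖∑ k ∈ Icc 1 ⌊Real.exp y⌋₊, a k - ∑ k ∈ Icc 1 ⌊Real.exp x⌋₊, a k‖ ≤
      C * (Real.exp (y - x) - 1 + Real.exp (-x)) := by
  have hC : 0 ≤ C := by simpa using (norm_nonneg _).trans (ha 1 one_ne_zero)
  have hfloor : ⌊Real.exp x⌋₊ ≤ ⌊Real.exp y⌋₊ := Nat.floor_mono (Real.exp_le_exp.2 hxy)
  have hsum : ∑ k ∈ Icc 1 ⌊Real.exp y⌋₊, a k - ∑ k ∈ Icc 1 ⌊Real.exp x⌋₊, a k =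
      ∑ k ∈ Ioc ⌊Real.exp x⌋₊ ⌊Real.exp y⌋₊, a k := by
    rw [sub_eq_iff_eq_add', ← zero_add 1, Icc_add_one_left_eq_Ioc, Icc_add_one_left_eq_Ioc,
      sum_Ioc_consecutive _ (Nat.zero_le _) hfloor]
  have hterm (n : ℕ) (hn : n ∈ Ioc ⌊Real.exp x⌋₊ ⌊Real.exp y⌋₊) :
      ‖a n‖ ≤ C * Real.exp (-x) := by
    have hxn : Real.exp x < n := Nat.lt_of_floor_lt (mem_Ioc.1 hn).1
    rw [Real.exp_neg, ← div_eq_mul_inv]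
    exact (ha n (Nat.ne_zero_of_lt (mem_Ioc.1 hn).1)).trans (by gcongr)
  calc ‖∑ k ∈ Icc 1 ⌊Real.exp y⌋₊, a k - ∑ k ∈ Icc 1 ⌊Real.exp x⌋₊, a k‖
      ≤ (⌊Real.exp y⌋₊ - ⌊Real.exp x⌋₊ : ℕ) * (C * Real.exp (-x)) := by
        rw [hsum]
        simpa using norm_sum_le_of_le _ hterm
    _ ≤ (Real.exp y - (Real.exp x - 1)) * (C * Real.exp (-x)) := by
        rw [Nat.cast_sub hfloor]
        gcongr
        · exact Nat.floor_le (Real.exp_pos y).le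
        · exact (Nat.sub_one_lt_floor _).le
    _ = C * (Real.exp (y - x) - 1 + Real.exp (-x)) := by
        rw [Real.exp_sub, Real.exp_neg]
        field_simp
        ring

lemma isSlowlyOscillating_sum_Icc_floor_exp {E : Type*} [NormedAddCommGroup E] {a : ℕ → E} {C : ℝ}
    (ha : ∀ n ≠ 0, ‖a n‖ ≤ C / n) :
    IsSlowlyOscillating fun u : ℝ => ∑ k ∈ Icc 1 ⌊Real.exp u⌋₊, a k := by
  have hC : 0 ≤ C := by simpa using (norm_nonneg _).trans (ha 1 one_ne_zero)
  have habs : Tendsto (fun p : ℝ × ℝ => |p.2|) (atTop ×ˢ 𝓝 0) (𝓝 0) := by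
    simpa using (tendsto_snd (f := atTop (α := ℝ)) (g := 𝓝 (0 : ℝ))).abs
  have hexp : Tendsto (fun p : ℝ × ℝ => Real.exp |p.2| - 1) (atTop ×ˢ 𝓝 0) (𝓝 0) := by
    simpa using ((Real.continuous_exp.tendsto 0).comp habs).sub_const 1
  have hexp' : Tendsto (fun p : ℝ × ℝ => Real.exp (-p.1 + |p.2|)) (atTop ×ˢ 𝓝 0) (𝓝 0) :=
    Real.tendsto_exp_atBot.comp ((tendsto_neg_atTop_atBot.comp tendsto_fst).atBot_add habs)
  refine squeeze_zero_norm (a := fun p => C * (Real.exp |p.2| - 1 + Real.exp (-p.1 + |p.2|)))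
    (fun ⟨x, h⟩ => ?_) (by simpa using (hexp.add hexp').const_mul C)
  dsimp only
  rcases le_total 0 h with hh | hh
  · refine (norm_sum_Icc_floor_exp_sub_le ha (le_add_of_nonneg_right hh)).trans ?_
    rw [add_sub_cancel_left, abs_of_nonneg hh]
    gcongr
    exact le_add_of_nonneg_right hh
  · rw [norm_sub_rev, abs_of_nonpos hh]
    convert norm_sum_Icc_floor_exp_sub_le ha (add_le_of_nonpos_right hh) using 5
    · ring
    · ring

theorem tendsto_sum_Icc_zero_of_LSeries_eq_mul {a : ℕ → ℂ} {G : ℂ → ℂ} {B C : ℝ}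
    (ha : ∀ n ≠ 0, ‖a n‖ ≤ C / n) (hB : ∀ N, ‖∑ k ∈ Icc 1 N, a k‖ ≤ B)
    (hG : ContinuousOn G {s | 0 ≤ s.re}) (hL : ∀ s : ℂ, 0 < s.re → LSeries a s = s * G s) :
    Tendsto (fun N => ∑ k ∈ Icc 1 N, a k) atTop (𝓝 0) := by
  have hlaplace (s : ℂ) (hs : 0 < s.re) :
      ∫ u in Set.Ioi (0 : ℝ), Complex.exp (-(s * u)) • ∑ k ∈ Icc 1 ⌊Real.exp u⌋₊, a k = G s := by
    have hsum : LSeriesSummable a s := LSeriesSummable_of_le_const_mul_rpow hs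
      ⟨C, fun n hn => by simpa [Real.rpow_neg_one, div_eq_mul_inv] using ha n hn⟩
    have hbdd : (fun N => ∑ k ∈ Icc 1 N, a k) =O[atTop] fun N : ℕ => (N : ℝ) ^ (0 : ℝ) :=
      .of_bound B (.of_forall fun N => by simpa using hB N)
    refine mul_left_cancel₀ (Complex.ne_zero_of_re_pos hs) ?_
    rw [← hL s hs, LSeries_eq_mul_integral_exp_neg_mul_smul a le_rfl hs hsum hbdd]
  have hmeas : Measurable fun u : ℝ => ∑ k ∈ Icc 1 ⌊Real.exp u⌋₊, a k :=
    (measurable_from_nat (f := fun N => ∑ k ∈ Icc 1 N, a k)).comp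
      (Nat.measurable_floor.comp Real.measurable_exp)
  have hlog := ((isSlowlyOscillating_sum_Icc_floor_exp ha).tendsto_zero_of_laplace
    hmeas.aestronglyMeasurable (fun u _ => hB _) hG hlaplace).comp
      (Real.tendsto_log_atTop.comp tendsto_natCast_atTop_atTop)
  refine hlog.congr' ?_
  filter_upwards [eventually_gt_atTop 0] with N hN
  simp only [Function.comp_apply, Real.exp_log (Nat.cast_pos.2 hN), Nat.floor_natCast]

lemma LSeries_div_natCast (f : ℕ → ℂ) (s : ℂ) :
    LSeries (fun n => f n / n) s = LSeries f (s + 1) := by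
  refine tsum_congr fun n => ?_
  rcases eq_or_ne n 0 with rfl | hn
  · simp only [LSeries.term_zero]
  · rw [LSeries.term_of_ne_zero hn, LSeries.term_of_ne_zero hn,
      Complex.cpow_add _ _ (Nat.cast_ne_zero.2 hn), Complex.cpow_one, div_div, mul_comm]

end DirichletSeries

section Moebius

open ArithmeticFunction DirichletCharacter Topology
open scoped ArithmeticFunction.Moebius

lemma LFunctionTrivChar₁_ne_zero (n : ℕ) [NeZero n] {s : ℂ} (hs : 1 ≤ s.re) :
    LFunctionTrivChar₁ n s ≠ 0 := by
  rcases eq_or_ne s 1 with rfl | hs1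
  · exact LFunctionTrivChar₁_apply_one_ne_zero n
  · rw [LFunctionTrivChar₁, Function.update_of_ne hs1]
    exact mul_ne_zero (sub_ne_zero.2 hs1)
      (LFunction_ne_zero_of_one_le_re 1 (.inr hs1) hs)

lemma LFunctionTrivChar₁_one_of_ne_one {s : ℂ} (hs : s ≠ 1) :
    LFunctionTrivChar₁ 1 s = (s - 1) * riemannZeta s := by
  rw [LFunctionTrivChar₁, Function.update_of_ne hs, LFunctionTrivChar, LFunction_modOne_eq]

lemma LSeries_moebius_div_natCast {s : ℂ} (hs : 0 < s.re) :
    LSeries (fun n => (μ n : ℂ) / n) s = (riemannZeta (s + 1))⁻¹ := by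
  have hs' : 1 < (s + 1).re := by simpa using hs
  rw [LSeries_div_natCast]
  refine eq_inv_of_mul_eq_one_right ?_
  rw [← LSeries_one_eq_riemannZeta hs', LSeries_one_mul_Lseries_moebius hs']

lemma norm_moebius_le_one (n : ℕ) : ‖(μ n : ℂ)‖ ≤ 1 := by
  rw [Complex.norm_intCast]
  exact_mod_cast abs_moebius_le_one

lemma sum_Icc_moebius_mul_div (R : Type*) [Ring R] {N : ℕ} (hN : N ≠ 0) :
    ∑ n ∈ Icc 1 N, (μ n : R) * (N / n : ℕ) = 1 := by
  have h := sum_Ioc_mul_zeta_eq_sum (μ : ArithmeticFunction R) N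
  simp only [coe_moebius_mul_coe_zeta, intCoe_apply] at h
  rw [← zero_add 1, Icc_add_one_left_eq_Ioc, ← h]
  simp [one_apply, Nat.one_le_iff_ne_zero, hN]

lemma norm_natCast_div_sub_le_one (m n : ℕ) : ‖(m / n : ℂ) - (m / n : ℕ)‖ ≤ 1 := by
  have hcast : (m / n : ℂ) - (m / n : ℕ) = (Int.fract (m / n : ℝ) : ℝ) := by
    rw [Int.fract, ← natCast_floor_eq_intCast_floor (by positivity), Nat.floor_div_eq_div]
    push_cast
    rfl
  rw [hcast, Complex.norm_real, Real.norm_of_nonneg (Int.fract_nonneg _)]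
  exact (Int.fract_lt_one _).le

lemma norm_sum_Icc_moebius_div_le (N : ℕ) : ‖∑ n ∈ Icc 1 N, (μ n : ℂ) / n‖ ≤ 2 := by
  rcases eq_or_ne N 0 with rfl | hN
  · simp
  have hsum : (N : ℂ) * ∑ n ∈ Icc 1 N, (μ n : ℂ) / n =
      1 + ∑ n ∈ Icc 1 N, (μ n : ℂ) * (N / n - (N / n : ℕ)) := by
    simp_rw [mul_sub, sum_sub_distrib, sum_Icc_moebius_mul_div ℂ hN, add_sub_cancel, mul_sum,
      mul_div_left_comm]
  have hfract : ‖∑ n ∈ Icc 1 N, (μ n : ℂ) * (N / n - (N / n : ℕ))‖ ≤ N := by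
    refine (norm_sum_le_of_le (n := fun _ => 1) _ fun n _ => ?_).trans (by simp)
    rw [norm_mul]
    exact mul_le_one₀ (norm_moebius_le_one n) (norm_nonneg _) (norm_natCast_div_sub_le_one N n)
  have hN1 : (1 : ℝ) ≤ N := Nat.one_le_cast.2 (Nat.one_le_iff_ne_zero.2 hN)
  have hmul : N * ‖∑ n ∈ Icc 1 N, (μ n : ℂ) / n‖ ≤ N * 2 := by
    calc N * ‖∑ n ∈ Icc 1 N, (μ n : ℂ) / n‖
        = ‖1 + ∑ n ∈ Icc 1 N, (μ n : ℂ) * (N / n - (N / n : ℕ))‖ := by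
          rw [← hsum, norm_mul, Complex.norm_natCast]
      _ ≤ 1 + N := (norm_add_le _ _).trans (by simpa using hfract)
      _ ≤ N * 2 := by linarith
  exact le_of_mul_le_mul_left hmul (by linarith)

theorem tendsto_sum_Icc_moebius_div :
    Tendsto (fun N => ∑ n ∈ Icc 1 N, (μ n : ℂ) / n) atTop (𝓝 0) := by
  refine tendsto_sum_Icc_zero_of_LSeries_eq_mul
    (G := fun s => (LFunctionTrivChar₁ 1 (s + 1))⁻¹) (C := 1) ?_
    norm_sum_Icc_moebius_div_le ?_ ?_
  · intro n hn
    rw [norm_div, Complex.norm_natCast]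
    gcongr
    exact norm_moebius_le_one n
  · refine (((differentiable_LFunctionTrivChar₁ 1).continuous.comp
      (continuous_add_const 1)).continuousOn).inv₀ fun s hs => ?_
    exact LFunctionTrivChar₁_ne_zero 1 (by simpa using hs)
  · intro s hs
    have hs0 := Complex.ne_zero_of_re_pos hs
    rw [LSeries_moebius_div_natCast hs, LFunctionTrivChar₁_one_of_ne_one (by simpa using hs0),
      add_sub_cancel_right, mul_inv, mul_inv_cancel_left₀ hs0]

lemma isMultFn_moebius_div : IsMultFn fun n => (μ n : ℂ) / n := by
  refine ⟨by simp, fun m n hmn => ?_⟩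
  simp only [isMultiplicative_moebius.map_mul_of_coprime hmn, Int.cast_mul, Nat.cast_mul,
    mul_div_mul_comm]

lemma seriesTendsTo_moebius_div : SeriesTendsTo (fun n => (μ (n + 1) : ℂ) / (n + 1 : ℕ)) 0 := by
  refine tendsto_sum_Icc_moebius_div.congr fun N => ?_
  rw [range_eq_Ico, sum_Ico_add' (fun n : ℕ => (μ n : ℂ) / n), zero_add,
    Ico_add_one_right_eq_Icc]

lemma seriesTendsTo_moebius_prime_pow_div {p : ℕ} (hp : p.Prime) :
    SeriesTendsTo (fun k => (μ (p ^ k) : ℂ) / (p ^ k : ℕ)) (1 - 1 / p) := by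
  have hsum : ∑ k ∈ range 2, (μ (p ^ k) : ℂ) / (p ^ k : ℕ) = 1 - 1 / p := by
    simp [sum_range_succ, moebius_apply_prime hp, sub_eq_add_neg, neg_div]
  rw [← hsum]
  refine (hasSum_sum_of_ne_finset_zero fun k hk => ?_).tendsto_sum_nat
  obtain ⟨hk0, hk1⟩ : k ≠ 0 ∧ k ≠ 1 := by
    rw [mem_range] at hk
    lia
  rw [moebius_apply_prime_pow hp hk0, if_neg hk1, Int.cast_zero, zero_div]

lemma one_sub_one_div_natCast_ne_zero {K : Type*} [DivisionRing K] [CharZero K] {n : ℕ}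
    (hn : n ≠ 1) : (1 - 1 / n : K) ≠ 0 :=
  sub_ne_zero.2 fun h => hn (by simpa using h.symm)

end Moebius

theorem stmt10 :
    IsMO (fun n : ℕ => (ArithmeticFunction.moebius n : ℂ) / n) ∧
    ∀ p : ℕ, p.Prime →
      SeriesTendsTo (fun k => (ArithmeticFunction.moebius (p ^ k) : ℂ) / ((p ^ k : ℕ) : ℂ))
        (1 - 1 / (p : ℂ)) ∧ (1 - 1 / (p : ℂ)) ≠ 0 := by
  have hprime (p : ℕ) (hp : p.Prime) : SeriesTendsTo (fun k =>
      (ArithmeticFunction.moebius (p ^ k) : ℂ) / ((p ^ k : ℕ) : ℂ)) (1 - 1 / (p : ℂ)) ∧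
      (1 - 1 / (p : ℂ)) ≠ 0 :=
    ⟨seriesTendsTo_moebius_prime_pow_div hp, one_sub_one_div_natCast_ne_zero hp.ne_one⟩
  exact ⟨⟨isMultFn_moebius_div, seriesTendsTo_moebius_div,
    fun p hp => ⟨1 - 1 / p, (hprime p hp).2, (hprime p hp).1⟩⟩, hprime⟩
end

section
/- Let α be a complex number with Re α > 0 and α ≠ 1. Then the series ∑_{n=1}^∞ (−1)^{n−1}/n^α converges and its sum equals (1 − 2^{1−α}) ζ(α), where ζ is the Riemann zeta function. -/
open Filter Finset

/-!
Grouping the terms of `∑ (-1) ^ n / (n + 1) ^ s` in consecutive pairs gains a factor of `n` in the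
decay, since the difference `(2m+1) ^ (-s) - (2m+2) ^ (-s)` is `O(|s| m ^ (-Re s - 1))` by the mean
value inequality. The paired series therefore converges locally uniformly on `Re s > 0` to a
holomorphic function. For `Re s > 1` the original series converges absolutely, and subtracting twice
the even-index terms `(2m) ^ (-s)` from `ζ(s)` gives `(1 - 2 ^ (1 - s)) ζ(s)`; the identity theorem
carries this to `Re s > 0`. Since single terms tend to zero, ungrouping does not change the limit.
-/

open scoped Topology

theorem tendsto_atTop_of_tendsto_even_of_tendsto_odd {X : Type*} {u : ℕ → X} {l : Filter X}
    (heven : Tendsto (fun n ↦ u (2 * n)) atTop l)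
    (hodd : Tendsto (fun n ↦ u (2 * n + 1)) atTop l) : Tendsto u atTop l := by
  intro s hs
  obtain ⟨A, hA⟩ := mem_atTop_sets.mp (heven hs)
  obtain ⟨B, hB⟩ := mem_atTop_sets.mp (hodd hs)
  refine mem_atTop_sets.mpr ⟨2 * (A + B), fun n hn ↦ ?_⟩
  rcases Nat.even_or_odd' n with ⟨k, rfl | rfl⟩
  · exact hA k (by lia)
  · exact hB k (by lia)

theorem sum_range_two_mul {M : Type*} [AddCommMonoid M] (f : ℕ → M) (n : ℕ) :
    ∑ k ∈ range (2 * n), f k = ∑ m ∈ range n, (f (2 * m) + f (2 * m + 1)) := by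
  induction n with
  | zero => simp
  | succ n ih => rw [mul_add_one, sum_range_succ, sum_range_succ, ih, sum_range_succ, add_assoc]

theorem tendsto_sum_range_of_tendsto_sum_pairs {M : Type*} [AddCommMonoid M] [TopologicalSpace M]
    [ContinuousAdd M] {f : ℕ → M} {a : M} (hf : Tendsto f atTop (𝓝 0))
    (hpairs : Tendsto (fun n ↦ ∑ m ∈ range n, (f (2 * m) + f (2 * m + 1))) atTop (𝓝 a)) :
    Tendsto (fun n ↦ ∑ k ∈ range n, f k) atTop (𝓝 a) := by
  have heven : Tendsto (fun n ↦ ∑ k ∈ range (2 * n), f k) atTop (𝓝 a) := by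
    simpa only [sum_range_two_mul] using hpairs
  have hterm : Tendsto (fun n ↦ f (2 * n)) atTop (𝓝 0) :=
    hf.comp (tendsto_id.const_mul_atTop' two_pos)
  refine tendsto_atTop_of_tendsto_even_of_tendsto_odd heven ?_
  simpa only [sum_range_succ, add_zero] using heven.add hterm

theorem tsum_even_sub_odd {G : Type*} [AddCommGroup G] [UniformSpace G] [IsUniformAddGroup G]
    [CompleteSpace G] [T2Space G] {f : ℕ → G} (hf : Summable f) :
    ∑' m, (f (2 * m) - f (2 * m + 1)) = ∑' n, f n - 2 • ∑' m, f (2 * m + 1) := by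
  have heven : Summable fun m ↦ f (2 * m) := hf.comp_injective fun a b h ↦ by simpa using h
  have hodd : Summable fun m ↦ f (2 * m + 1) := hf.comp_injective fun a b h ↦ by simpa using h
  rw [heven.tsum_sub hodd, ← tsum_even_add_odd heven hodd, two_nsmul]
  abel

theorem summable_nat_add_one_rpow {p : ℝ} :
    Summable (fun n : ℕ ↦ ((n : ℝ) + 1) ^ p) ↔ p < -1 := by
  rw [← Real.summable_nat_rpow, ← summable_nat_add_iff (f := fun n : ℕ ↦ (n : ℝ) ^ p) 1]
  simp only [Nat.cast_add_one]

theorem norm_ofReal_cpow_sub_ofReal_cpow_le {s : ℂ} (hs : s.re ≤ 1) {a b : ℝ} (ha : 0 < a)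
    (hab : a ≤ b) : ‖(b : ℂ) ^ s - (a : ℂ) ^ s‖ ≤ ‖s‖ * a ^ (s.re - 1) * (b - a) := by
  rcases eq_or_ne s 0 with rfl | hs0
  · simp
  have hderiv (t : ℝ) (ht : t ∈ Set.Icc a b) :
      HasDerivWithinAt (fun t : ℝ ↦ (t : ℂ) ^ s) (s * (t : ℂ) ^ (s - 1)) (Set.Icc a b) t :=
    (hasDerivAt_ofReal_cpow_const (ha.trans_le ht.1).ne' hs0).hasDerivWithinAt
  have hbound (t : ℝ) (ht : t ∈ Set.Icc a b) :
      ‖s * (t : ℂ) ^ (s - 1)‖ ≤ ‖s‖ * a ^ (s.re - 1) := by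
    rw [norm_mul, Complex.norm_cpow_eq_rpow_re_of_pos (ha.trans_le ht.1), Complex.sub_re,
      Complex.one_re]
    gcongr ?_ * ?_
    exact Real.rpow_le_rpow_of_nonpos ha ht.1 (by linarith)
  simpa [Real.norm_of_nonneg (sub_nonneg.mpr hab)] using
    (convex_Icc a b).norm_image_sub_le_of_norm_hasDerivWithin_le hderiv hbound
      (Set.left_mem_Icc.mpr hab) (Set.right_mem_Icc.mpr hab)

theorem tendsto_neg_one_pow_div_nat_add_one_cpow {s : ℂ} (hs : 0 < s.re) :
    Tendsto (fun n : ℕ ↦ (-1 : ℂ) ^ n / ((n : ℂ) + 1) ^ s) atTop (𝓝 0) := by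
  have hnorm (n : ℕ) : ‖(-1 : ℂ) ^ n / ((n : ℂ) + 1) ^ s‖ = ((n + 1 : ℕ) : ℝ) ^ (-s.re) := by
    rw [norm_div, norm_pow, norm_neg, norm_one, one_pow, ← Nat.cast_add_one,
      Complex.norm_natCast_cpow_of_pos n.succ_pos, Real.rpow_neg (Nat.cast_nonneg _), one_div]
  rw [tendsto_zero_iff_norm_tendsto_zero]
  simp only [hnorm]
  exact (tendsto_rpow_neg_atTop hs).comp
    (tendsto_natCast_atTop_atTop.comp (tendsto_add_atTop_nat 1))

theorem eqOn_re_gt_of_eqOn_re_gt {E : Type*} [NormedAddCommGroup E] [NormedSpace ℂ E]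
    [CompleteSpace E] {f g : ℂ → E} {a b : ℝ} (hf : DifferentiableOn ℂ f {s | a < s.re})
    (hg : DifferentiableOn ℂ g {s | a < s.re}) (hfg : Set.EqOn f g {s | b < s.re}) :
    Set.EqOn f g {s | a < s.re} := by
  obtain ⟨c, hc⟩ := exists_gt (max a b)
  have hac : (c : ℂ) ∈ {s : ℂ | a < s.re} := (le_max_left a b).trans_lt hc
  have hbc : (c : ℂ) ∈ {s : ℂ | b < s.re} := (le_max_right a b).trans_lt hc
  exact (hf.analyticOnNhd (Complex.isOpen_re_gt a)).eqOn_of_preconnected_of_eventuallyEq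
    (hg.analyticOnNhd (Complex.isOpen_re_gt a)) (convex_halfSpace_re_gt a).isPreconnected hac
    (hfg.eventuallyEq_of_mem ((Complex.isOpen_re_gt b).mem_nhds hbc))

/-- The sum of the terms of index `2 * m` and `2 * m + 1` in the alternating series
`∑ (-1) ^ n / (n + 1) ^ s`. -/
noncomputable def etaPair (m : ℕ) (s : ℂ) : ℂ :=
  (2 * m + 1 : ℂ) ^ (-s) - (2 * m + 2 : ℂ) ^ (-s)

/-- The Dirichlet eta function `η(s) = ∑ (-1) ^ n / (n + 1) ^ s` on `0 < Re s`, encoded through the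
series of pairs because `tsum` only sums unconditionally convergent series. -/
noncomputable def dirichletEta (s : ℂ) : ℂ :=
  ∑' m, etaPair m s

theorem etaPair_eq_one_div_sub_one_div (m : ℕ) (s : ℂ) :
    etaPair m s = 1 / (((2 * m : ℕ) : ℂ) + 1) ^ s - 1 / (((2 * m + 1 : ℕ) : ℂ) + 1) ^ s := by
  simp only [etaPair, Complex.cpow_neg, one_div]
  push_cast
  rw [add_assoc (2 * (m : ℂ)), one_add_one_eq_two]

theorem even_term_add_odd_term_eq_etaPair (m : ℕ) (s : ℂ) :
    (-1 : ℂ) ^ (2 * m) / (((2 * m : ℕ) : ℂ) + 1) ^ s +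
      (-1 : ℂ) ^ (2 * m + 1) / (((2 * m + 1 : ℕ) : ℂ) + 1) ^ s = etaPair m s := by
  rw [etaPair_eq_one_div_sub_one_div, pow_succ, (even_two_mul m).neg_one_pow]
  ring

theorem norm_etaPair_le (m : ℕ) {s : ℂ} (hs : -1 ≤ s.re) :
    ‖etaPair m s‖ ≤ ‖s‖ * ((m : ℝ) + 1) ^ (-s.re - 1) := by
  have hsub : ‖etaPair m s‖ ≤ ‖s‖ * (2 * m + 1 : ℝ) ^ (-s.re - 1) := by
    have h := norm_ofReal_cpow_sub_ofReal_cpow_le (s := -s) (a := 2 * m + 1) (b := 2 * m + 2)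
      (by rw [Complex.neg_re]; linarith) (by positivity) (by linarith)
    rw [norm_sub_rev] at h
    simpa [etaPair, add_sub_add_left_eq_sub, show (2 : ℝ) - 1 = 1 by norm_num] using h
  have hm : (m : ℝ) + 1 ≤ 2 * m + 1 := by linarith [m.cast_nonneg (α := ℝ)]
  refine hsub.trans ?_
  gcongr ?_ * ?_
  exact Real.rpow_le_rpow_of_nonpos (by positivity) hm (by linarith)

theorem summable_etaPair {s : ℂ} (hs : 0 < s.re) : Summable fun m ↦ etaPair m s :=
  .of_norm_bounded ((summable_nat_add_one_rpow.mpr (by linarith)).mul_left ‖s‖)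
    fun m ↦ norm_etaPair_le m (by linarith)

theorem differentiable_etaPair (m : ℕ) : Differentiable ℂ (etaPair m) := by
  have hodd : (2 * m + 1 : ℂ) ≠ 0 := by exact_mod_cast (2 * m).succ_ne_zero
  have heven : (2 * m + 2 : ℂ) ≠ 0 := by exact_mod_cast (2 * m + 1).succ_ne_zero
  exact (differentiable_neg.const_cpow (.inl hodd)).sub (differentiable_neg.const_cpow (.inl heven))

theorem differentiableOn_dirichletEta : DifferentiableOn ℂ dirichletEta {s | 0 < s.re} := by
  intro s (hs : 0 < s.re)
  let U : Set ℂ := {z | s.re / 2 < z.re} ∩ Metric.ball 0 (‖s‖ + 1)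
  have hU : IsOpen U := (Complex.isOpen_re_gt _).inter Metric.isOpen_ball
  have hsU : s ∈ U := ⟨half_lt_self hs, by simp⟩
  have hbound (m : ℕ) (z : ℂ) (hz : z ∈ U) :
      ‖etaPair m z‖ ≤ (‖s‖ + 1) * ((m : ℝ) + 1) ^ (-(s.re / 2) - 1) := by
    obtain ⟨hre : s.re / 2 < z.re, hball⟩ := hz
    have hnorm : ‖z‖ ≤ ‖s‖ + 1 := (mem_ball_zero_iff.mp hball).le
    refine (norm_etaPair_le m (by linarith)).trans ?_
    gcongr
    linarith [m.cast_nonneg (α := ℝ)]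
  have hdiff : DifferentiableOn ℂ dirichletEta U :=
    Complex.differentiableOn_tsum_of_summable_norm
      ((summable_nat_add_one_rpow.mpr (by linarith)).mul_left _)
      (fun m ↦ (differentiable_etaPair m).differentiableOn) hU hbound
  exact (hdiff.differentiableAt (hU.mem_nhds hsU)).differentiableWithinAt

theorem tsum_one_div_even_cpow (s : ℂ) :
    ∑' m : ℕ, 1 / (((2 * m + 1 : ℕ) : ℂ) + 1) ^ s =
      (2 : ℂ) ^ (-s) * ∑' n : ℕ, 1 / ((n : ℂ) + 1) ^ s := by
  have hterm (m : ℕ) :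
      1 / (((2 * m + 1 : ℕ) : ℂ) + 1) ^ s = (2 : ℂ) ^ (-s) * (1 / ((m : ℂ) + 1) ^ s) := by
    have hcast : ((2 * m + 1 : ℕ) : ℂ) + 1 = (2 : ℕ) * (m + 1 : ℕ) := by push_cast; ring
    rw [hcast, Complex.natCast_mul_natCast_cpow, Complex.cpow_neg, one_div, mul_inv, one_div,
      Nat.cast_ofNat, Nat.cast_add_one]
  simp only [hterm, tsum_mul_left]

theorem dirichletEta_eq_of_one_lt_re {s : ℂ} (hs : 1 < s.re) :
    dirichletEta s = (1 - (2 : ℂ) ^ (1 - s)) * riemannZeta s := by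
  have hsum : Summable fun n : ℕ ↦ 1 / ((n : ℂ) + 1) ^ s := by
    simpa using (summable_nat_add_iff 1).mpr (Complex.summable_one_div_nat_cpow.mpr hs)
  have htwo : (2 : ℂ) ^ (1 - s) = 2 * (2 : ℂ) ^ (-s) := by
    rw [sub_eq_add_neg, Complex.cpow_add _ _ two_ne_zero, Complex.cpow_one]
  calc dirichletEta s
      = ∑' m : ℕ, (1 / (((2 * m : ℕ) : ℂ) + 1) ^ s - 1 / (((2 * m + 1 : ℕ) : ℂ) + 1) ^ s) :=
        tsum_congr fun m ↦ etaPair_eq_one_div_sub_one_div m s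
    _ = riemannZeta s - 2 * ((2 : ℂ) ^ (-s) * riemannZeta s) := by
        rw [tsum_even_sub_odd hsum, tsum_one_div_even_cpow, two_nsmul, ← two_mul,
          zeta_eq_tsum_one_div_nat_add_one_cpow hs]
    _ = (1 - (2 : ℂ) ^ (1 - s)) * riemannZeta s := by rw [htwo]; ring

theorem sub_one_mul_riemannZeta {s : ℂ} (hs : s ≠ 1) :
    (s - 1) * riemannZeta s = riemannZeta₁ s := by
  rw [riemannZeta_eq_inv_sub_mul hs, mul_inv_cancel_left₀ (sub_ne_zero.mpr hs)]

theorem dirichletEta_eq {s : ℂ} (hs : 0 < s.re) (hs1 : s ≠ 1) :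
    dirichletEta s = (1 - (2 : ℂ) ^ (1 - s)) * riemannZeta s := by
  -- Both sides are multiplied by `s - 1` to remove the pole of `ζ` from the half-plane.
  have hleft : DifferentiableOn ℂ (fun z ↦ (z - 1) * dirichletEta z) {z | 0 < z.re} :=
    (differentiable_id.sub_const 1).differentiableOn.mul differentiableOn_dirichletEta
  have hright : Differentiable ℂ fun z ↦ (1 - (2 : ℂ) ^ (1 - z)) * riemannZeta₁ z :=
    ((differentiable_id.const_sub 1).const_cpow (.inl two_ne_zero)).const_sub 1 |>.mul
      differentiable_riemannZeta₁
  have heq : Set.EqOn (fun z ↦ (z - 1) * dirichletEta z)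
      (fun z ↦ (1 - (2 : ℂ) ^ (1 - z)) * riemannZeta₁ z) {z | 1 < z.re} := by
    intro z (hz : 1 < z.re)
    have hz1 : z ≠ 1 := by rintro rfl; simp at hz
    simp only [dirichletEta_eq_of_one_lt_re hz, ← sub_one_mul_riemannZeta hz1]
    ring
  apply mul_left_cancel₀ (sub_ne_zero.mpr hs1)
  calc (s - 1) * dirichletEta s
      = (1 - (2 : ℂ) ^ (1 - s)) * riemannZeta₁ s :=
        eqOn_re_gt_of_eqOn_re_gt hleft hright.differentiableOn heq hs
    _ = (s - 1) * ((1 - (2 : ℂ) ^ (1 - s)) * riemannZeta s) := by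
        rw [← sub_one_mul_riemannZeta hs1, mul_left_comm]

theorem stmt11 (α : ℂ) (hα : 0 < α.re) (hα1 : α ≠ 1) :
    SeriesTendsTo (fun n => (-1 : ℂ) ^ n / ((n : ℂ) + 1) ^ α)
      ((1 - (2 : ℂ) ^ (1 - α)) * riemannZeta α) := by
  have hpairs : Tendsto (fun N ↦ ∑ m ∈ range N, etaPair m α) atTop (𝓝 (dirichletEta α)) :=
    (summable_etaPair hα).hasSum.tendsto_sum_nat
  rw [← dirichletEta_eq hα hα1]
  refine tendsto_sum_range_of_tendsto_sum_pairs (tendsto_neg_one_pow_div_nat_add_one_cpow hα) ?_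
  simpa only [even_term_add_odd_term_eq_etaPair] using hpairs
end
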